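/- Consider the two-period time-dependent quantum walk on ℤ whose coin sequence is U_{2s} = H₀ and U_{2s+1} = H₁ (s = 0,1,2,...), where H₀ = [[a₀,b₀],[c₀,d₀]] and H₁ = [[a₁,b₁],[c₁,d₁]] are real orthogonal 2×2 matrices all of whose entries are nonzero. If det(H₁H₀) > 0, then X_t/t converges weakly as t → ∞ to a random variable Z whose law is absolutely continuous with density f(x) = f_K(x; a_ξ) · [1 − (|α|² − |β|² + ((α·conj(β) + conj(α)·β)·b₀)/a₀)·x], where |a_ξ| = min{|a₀|, |a₁|}. -/

import Mathlib

open MeasureTheory Complex Filter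

noncomputable section

/-- The Konno density function `f_K(x; a)`; only `|a|` matters. -/
def konnoDensity (a x : ℝ) : ℝ :=
  if |x| < |a| then
    Real.sqrt (1 - |a| ^ 2) / (Real.pi * (1 - x ^ 2) * Real.sqrt (|a| ^ 2 - x ^ 2))
  else 0

/-- Time evolution of a time-dependent discrete-time quantum walk on `ℤ`:
`ψ_{t+1}(x) = P_t ψ_t(x+1) + Q_t ψ_t(x-1)`, where `P_t`/`Q_t` are the top/bottom
row parts of the coin `U t`. -/
def QWEvolves (U : ℕ → Matrix (Fin 2) (Fin 2) ℂ) (ψ : ℕ → ℤ → Fin 2 → ℂ) : Prop :=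
  ∀ t : ℕ, ∀ x : ℤ,
    ψ (t + 1) x 0 = U t 0 0 * ψ t (x + 1) 0 + U t 0 1 * ψ t (x + 1) 1 ∧
    ψ (t + 1) x 1 = U t 1 0 * ψ t (x - 1) 0 + U t 1 1 * ψ t (x - 1) 1

/-- Initial state `ψ₀(0) = ᵀ(α, β)`, `ψ₀(x) = 0` for `x ≠ 0`. -/
def QWInit (α β : ℂ) (ψ : ℕ → ℤ → Fin 2 → ℂ) : Prop :=
  ψ 0 0 0 = α ∧ ψ 0 0 1 = β ∧ ∀ x : ℤ, x ≠ 0 → (ψ 0 x 0 = 0 ∧ ψ 0 x 1 = 0)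

/-- `P(X_t = x) = ‖ψ_t(x)‖²`. -/
def qwProb (ψ : ℕ → ℤ → Fin 2 → ℂ) (t : ℕ) (x : ℤ) : ℝ :=
  Complex.normSq (ψ t x 0) + Complex.normSq (ψ t x 1)

/-- The law of `X_t / t`: `μ_t = Σ_{x ∈ ℤ} P(X_t = x) δ_{x/t}`. -/
def qwMeasure (ψ : ℕ → ℤ → Fin 2 → ℂ) (t : ℕ) : Measure ℝ :=
  Measure.sum fun x : ℤ => ENNReal.ofReal (qwProb ψ t x) • Measure.dirac ((x : ℝ) / (t : ℝ))

/-- Weak convergence of `X_t / t` to the law with density `f`. -/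
def qwWeakLimit (ψ : ℕ → ℤ → Fin 2 → ℂ) (f : ℝ → ℝ) : Prop :=
  ∀ g : BoundedContinuousFunction ℝ ℝ,
    Tendsto (fun t : ℕ => ∫ y, g y ∂ qwMeasure ψ t) atTop (nhds (∫ y, g y * f y))

/-- `R(k) = diag(e^{ik}, e^{-ik})`. -/
def Rmat (k : ℝ) : Matrix (Fin 2) (Fin 2) ℂ :=
  !![Complex.exp (Complex.I * k), 0; 0, Complex.exp (-(Complex.I * k))]

/-! In momentum space the walk is a product of unitary matrices, and the characteristic function
of `X_t / t` at `ξ` is the average over `k` of the overlaps `⟨W_t(k) φ, W_t(k - ξ/t) φ⟩`, where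
`W_t` is the product of the first `t` factors. Since `det (H₁ H₀) = 1`, the two-step evolution
lies in `SU(2)`: it is the rotation `cos θ + sin θ J` about an axis `J(k)` by the angle `θ(k)`
with `cos θ = a₀ a₁ cos 2k - Δ b₀ b₁`, where `Δ = det H₀ = det H₁`. In the overlap of its
`(t/2)`-th powers at the momenta `k` and `k - ξ/t` the variation of the axis is negligible, while
that of the angle accumulates, so the limit is a rotation by `-ξ v(k)`, the group velocity `v`
being half the derivative of `θ`. Averaging `k` with `-k` keeps of the axis only `J(k) - J(-k)`,
which is `v(k)` times a fixed matrix: this is the factor linear in `x` of the limit density.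
Finally, `v` and `-v` at a uniform momentum average to the Konno law: `θ` is the third side of a
spherical triangle with two fixed sides enclosing the angle `2k`, and the altitude on `θ` provides
the coordinate that uniformizes `v`. -/

open scoped Real Topology ComplexConjugate Matrix BoundedContinuousFunction

section SymmetricIntegrals

variable {E : Type*} [NormedAddCommGroup E] [NormedSpace ℝ E] {a : ℝ} {f : ℝ → E}

lemma integral_neg_self_eq_integral_zero_add_comp_neg (hf : IntervalIntegrable f volume (-a) a) :
    ∫ x in -a..a, f x = ∫ x in (0 : ℝ)..a, (f x + f (-x)) := by
  have h0 : (0 : ℝ) ∈ Set.uIcc (-a) a := by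
    rcases le_total 0 a with h | h <;> simp [h]
  have hleft : IntervalIntegrable f volume (-a) 0 :=
    hf.mono_set (Set.uIcc_subset_uIcc_left h0)
  have hright : IntervalIntegrable f volume 0 a :=
    hf.mono_set (Set.uIcc_subset_uIcc_right h0)
  have hneg : IntervalIntegrable (fun x => f (-x)) volume 0 a := by
    simpa using hleft.symm.comp_sub_left 0
  rw [intervalIntegral.integral_add hright hneg, intervalIntegral.integral_comp_neg, neg_zero,
    add_comm, intervalIntegral.integral_add_adjacent_intervals hleft hright]

lemma integral_neg_self_eq_zero_of_odd (hf : Function.Odd f) : ∫ x in -a..a, f x = 0 := by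
  have h := intervalIntegral.integral_comp_neg (a := -a) (b := a) f
  simp only [hf _, intervalIntegral.integral_neg, neg_neg] at h
  have : IsAddTorsionFree E := .of_isTorsionFree ℝ E
  exact self_eq_neg.1 h.symm

end SymmetricIntegrals

section KonnoDensity

/-- Angular parametrization of the support `(-m, m)` of the Konno density, under which that density
becomes uniform on `(0, π)`. -/
def konnoParam (m y : ℝ) : ℝ :=
  m * Real.cos y / √(1 - m ^ 2 * Real.sin y ^ 2)

lemma konnoParam_neg_left (m y : ℝ) : konnoParam (-m) y = -konnoParam m y := by
  simp [konnoParam, neg_div]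

lemma konnoParam_neg (m y : ℝ) : konnoParam m (-y) = konnoParam m y := by
  simp [konnoParam]

lemma konnoParam_add_pi (m y : ℝ) : konnoParam m (y + π) = -konnoParam m y := by
  simp [konnoParam, neg_div]

lemma konnoParam_pi_sub (m y : ℝ) : konnoParam m (π - y) = -konnoParam m y := by
  simp [konnoParam, neg_div]

variable {m : ℝ}

lemma one_sub_sq_mul_sin_sq_pos (hm : m ^ 2 < 1) (y : ℝ) : 0 < 1 - m ^ 2 * Real.sin y ^ 2 := by
  nlinarith [mul_le_mul_of_nonneg_left (Real.sin_sq_le_one y) (sq_nonneg m)]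

lemma konnoParam_sq (hm : m ^ 2 < 1) (y : ℝ) :
    konnoParam m y ^ 2 = m ^ 2 * Real.cos y ^ 2 / (1 - m ^ 2 * Real.sin y ^ 2) := by
  rw [konnoParam, div_pow, mul_pow, Real.sq_sqrt (one_sub_sq_mul_sin_sq_pos hm y).le]

lemma one_sub_konnoParam_sq (hm : m ^ 2 < 1) (y : ℝ) :
    1 - konnoParam m y ^ 2 = (1 - m ^ 2) / (1 - m ^ 2 * Real.sin y ^ 2) := by
  have hD := one_sub_sq_mul_sin_sq_pos hm y
  rw [konnoParam_sq hm]
  field_simp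
  linear_combination (-m ^ 2) * Real.sin_sq_add_cos_sq y

lemma sq_sub_konnoParam_sq (hm : m ^ 2 < 1) (y : ℝ) :
    m ^ 2 - konnoParam m y ^ 2 =
      m ^ 2 * (1 - m ^ 2) * Real.sin y ^ 2 / (1 - m ^ 2 * Real.sin y ^ 2) := by
  have hD := one_sub_sq_mul_sin_sq_pos hm y
  rw [konnoParam_sq hm]
  field_simp
  linear_combination (-m ^ 2) * Real.sin_sq_add_cos_sq y

lemma continuous_konnoParam (hm : m ^ 2 < 1) : Continuous (konnoParam m) := by
  unfold konnoParam
  exact Continuous.div (by fun_prop) (by fun_prop) fun y =>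
    (Real.sqrt_pos.2 (one_sub_sq_mul_sin_sq_pos hm y)).ne'

lemma hasDerivAt_konnoParam (hm : m ^ 2 < 1) (y : ℝ) :
    HasDerivAt (konnoParam m)
      (-(m * Real.sin y * (1 - m ^ 2)) / √(1 - m ^ 2 * Real.sin y ^ 2) ^ 3) y := by
  have hD := one_sub_sq_mul_sin_sq_pos hm y
  have hs := Real.sqrt_pos.2 hD
  have hderiv : HasDerivAt (fun y => 1 - m ^ 2 * Real.sin y ^ 2)
      (-(m ^ 2 * (2 * Real.sin y * Real.cos y))) y := by
    simpa using (((Real.hasDerivAt_sin y).pow 2).const_mul (m ^ 2)).const_sub 1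
  convert! ((Real.hasDerivAt_cos y).const_mul m).div (hderiv.sqrt hD.ne') hs.ne' using 1
  have hsq := Real.sq_sqrt hD.le
  set q := √(1 - m ^ 2 * Real.sin y ^ 2)
  field_simp
  linear_combination m * Real.sin y * hsq - m ^ 3 * Real.sin y * Real.sin_sq_add_cos_sq y

lemma abs_konnoParam_lt (h0 : 0 < m) (hm : m ^ 2 < 1) {y : ℝ} (hy : y ∈ Set.Ioo 0 π) :
    |konnoParam m y| < m := by
  have hD := one_sub_sq_mul_sin_sq_pos hm y
  have hs := Real.sin_pos_of_mem_Ioo hy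
  have := sub_pos.2 hm
  have : 0 < m ^ 2 - konnoParam m y ^ 2 := by
    rw [sq_sub_konnoParam_sq hm]; positivity
  exact abs_lt_of_sq_lt_sq (by linarith) h0.le

lemma abs_deriv_mul_konnoDensity_konnoParam (h0 : 0 < m) (hm : m ^ 2 < 1) {y : ℝ}
    (hy : y ∈ Set.Ioo 0 π) :
    |-(m * Real.sin y * (1 - m ^ 2)) / √(1 - m ^ 2 * Real.sin y ^ 2) ^ 3| *
      konnoDensity m (konnoParam m y) = π⁻¹ := by
  have hD := one_sub_sq_mul_sin_sq_pos hm y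
  have hq := Real.sqrt_pos.2 hD
  have hs := Real.sin_pos_of_mem_Ioo hy
  have hm' := sub_pos.2 hm
  have hn := Real.sqrt_pos.2 hm'
  rw [konnoDensity, abs_of_pos h0, if_pos (abs_konnoParam_lt h0 hm hy), one_sub_konnoParam_sq hm,
    sq_sub_konnoParam_sq hm, neg_div, abs_neg, abs_of_pos (by positivity),
    Real.sqrt_div' _ hD.le, Real.sqrt_mul' _ (sq_nonneg _), Real.sqrt_mul' _ hm'.le,
    Real.sqrt_sq h0.le, Real.sqrt_sq hs.le]
  have hsq := Real.sq_sqrt hD.le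
  have hsq' := Real.sq_sqrt hm'.le
  set q := √(1 - m ^ 2 * Real.sin y ^ 2)
  set n := √(1 - m ^ 2)
  rw [← hsq, ← hsq']
  have := Real.pi_pos
  field_simp

lemma strictAntiOn_konnoParam (h0 : 0 < m) (hm : m ^ 2 < 1) :
    StrictAntiOn (konnoParam m) (Set.Icc 0 π) := by
  refine strictAntiOn_of_deriv_neg (convex_Icc _ _) (continuous_konnoParam hm).continuousOn ?_
  intro y hy
  rw [interior_Icc] at hy
  have hs := Real.sin_pos_of_mem_Ioo hy
  have hq := Real.sqrt_pos.2 (one_sub_sq_mul_sin_sq_pos hm y)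
  have := sub_pos.2 hm
  rw [(hasDerivAt_konnoParam hm y).deriv, neg_div, neg_lt_zero]
  positivity

lemma konnoParam_image_Ioo (h0 : 0 < m) (hm : m ^ 2 < 1) :
    konnoParam m '' Set.Ioo 0 π = Set.Ioo (-m) m := by
  apply Set.Subset.antisymm
  · rintro _ ⟨y, hy, rfl⟩
    exact abs_lt.1 (abs_konnoParam_lt h0 hm hy)
  · have h := intermediate_value_Ioo' Real.pi_pos.le
      (continuous_konnoParam hm).continuousOn (f := konnoParam m)
    simpa [konnoParam] using h

lemma konnoDensity_nonneg (hm : m ^ 2 < 1) (x : ℝ) : 0 ≤ konnoDensity m x := by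
  unfold konnoDensity
  split_ifs with hx
  · have hx2 : x ^ 2 < 1 := (sq_lt_sq.2 hx).trans hm
    have := sub_pos.2 hx2
    positivity
  · rfl

lemma konnoDensity_mul_one_sub_mul_nonneg (hm : m ^ 2 < 1) {C : ℝ} (hC : |C| * |m| ≤ 1) (x : ℝ) :
    0 ≤ konnoDensity m x * (1 - C * x) := by
  by_cases hx : |x| < |m|
  · refine mul_nonneg (konnoDensity_nonneg hm x) (sub_nonneg.2 ?_)
    calc C * x ≤ |C| * |x| := (le_abs_self _).trans_eq (abs_mul C x)
      _ ≤ |C| * |m| := by gcongr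
      _ ≤ 1 := hC
  · rw [konnoDensity, if_neg hx, zero_mul]

variable {E : Type*} [NormedAddCommGroup E] [NormedSpace ℝ E]

lemma konnoDensity_smul_eq_indicator (h0 : 0 < m) (g : ℝ → E) :
    (fun x => konnoDensity m x • g x) =
      (Set.Ioo (-m) m).indicator (fun x => konnoDensity m x • g x) := by
  refine (Set.indicator_eq_self.2 (Function.support_subset_iff'.2 fun x hx => ?_)).symm
  rw [konnoDensity, abs_of_pos h0, if_neg fun h => hx (abs_lt.1 h), zero_smul]

lemma integral_konnoDensity_smul (h0 : 0 < m) (hm : m ^ 2 < 1) (g : ℝ → E) :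
    ∫ x, konnoDensity m x • g x = π⁻¹ • ∫ y in (0 : ℝ)..π, g (konnoParam m y) := by
  rw [konnoDensity_smul_eq_indicator h0, integral_indicator measurableSet_Ioo,
    ← konnoParam_image_Ioo h0 hm, integral_image_eq_integral_abs_deriv_smul measurableSet_Ioo
      (fun y _ => (hasDerivAt_konnoParam hm y).hasDerivWithinAt)
      ((strictAntiOn_konnoParam h0 hm).injOn.mono Set.Ioo_subset_Icc_self),
    intervalIntegral.integral_of_le Real.pi_pos.le, integral_Ioc_eq_integral_Ioo, ← integral_smul]
  refine setIntegral_congr_fun measurableSet_Ioo fun y hy => ?_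
  simp only [smul_smul, abs_deriv_mul_konnoDensity_konnoParam h0 hm hy]

lemma integrable_konnoDensity_smul (h0 : 0 < m) (hm : m ^ 2 < 1) {g : ℝ → E}
    (hg : Continuous g) : Integrable (fun x => konnoDensity m x • g x) := by
  rw [konnoDensity_smul_eq_indicator h0, integrable_indicator_iff measurableSet_Ioo,
    ← konnoParam_image_Ioo h0 hm, integrableOn_image_iff_integrableOn_abs_deriv_smul
      measurableSet_Ioo (fun y _ => (hasDerivAt_konnoParam hm y).hasDerivWithinAt)
      ((strictAntiOn_konnoParam h0 hm).injOn.mono Set.Ioo_subset_Icc_self)]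
  have hc : Continuous fun y => π⁻¹ • g (konnoParam m y) :=
    (hg.comp (continuous_konnoParam hm)).const_smul _
  refine ((hc.integrableOn_Icc (a := 0) (b := π)).mono_set
    Set.Ioo_subset_Icc_self).congr_fun (fun y hy => ?_) measurableSet_Ioo
  simp only [smul_smul, abs_deriv_mul_konnoDensity_konnoParam h0 hm hy]

end KonnoDensity

section VelocityLaw

/-- Group velocity `θ'(φ)` of the dispersion relation `cos (θ φ) = p cos φ + q`. -/
def velocity (p q φ : ℝ) : ℝ :=
  p * Real.sin φ / √(1 - (p * Real.cos φ + q) ^ 2)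

lemma velocity_neg (p q φ : ℝ) : velocity p q (-φ) = -velocity p q φ := by
  simp [velocity, neg_div]

lemma velocity_periodic (p q : ℝ) : Function.Periodic (velocity p q) (2 * π) := fun φ => by
  simp [velocity]

lemma velocity_sq {p q φ : ℝ} (h : 0 < 1 - (p * Real.cos φ + q) ^ 2) :
    velocity p q φ ^ 2 = (p * Real.sin φ) ^ 2 / (1 - (p * Real.cos φ + q) ^ 2) := by
  rw [velocity, div_pow, Real.sq_sqrt h.le]

lemma ae_sin_two_mul_ne_zero : ∀ᵐ k : ℝ, Real.sin (2 * k) ≠ 0 := by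
  have hcount : {k : ℝ | Real.sin (2 * k) = 0}.Countable := by
    refine (Set.countable_range fun n : ℤ => (n : ℝ) * π / 2).mono fun k hk => ?_
    obtain ⟨n, hn⟩ := Real.sin_eq_zero_iff.1 hk
    exact ⟨n, by linarith⟩
  exact (hcount.ae_notMem volume).mono fun k hk => hk

variable {m M n N : ℝ}

lemma one_sub_phase_sq (hmn : m ^ 2 + n ^ 2 = 1) (hMN : M ^ 2 + N ^ 2 = 1) (φ : ℝ) :
    1 - (m * M * Real.cos φ + n * N) ^ 2 =
      (M * Real.sin φ) ^ 2 + (m * N - n * M * Real.cos φ) ^ 2 := by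
  linear_combination -hMN - (M ^ 2 * Real.cos φ ^ 2 + N ^ 2) * hmn -
    M ^ 2 * Real.sin_sq_add_cos_sq φ

lemma one_sub_phase_sq_pos_of_sin_ne_zero (hmn : m ^ 2 + n ^ 2 = 1) (hMN : M ^ 2 + N ^ 2 = 1)
    (hM : M ≠ 0) {φ : ℝ} (hφ : Real.sin φ ≠ 0) : 0 < 1 - (m * M * Real.cos φ + n * N) ^ 2 := by
  rw [one_sub_phase_sq hmn hMN]
  positivity

lemma one_sub_phase_sq_pos_of_sq_lt_sq (hmn : m ^ 2 + n ^ 2 = 1) (hMN : M ^ 2 + N ^ 2 = 1)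
    (hlt : m ^ 2 < M ^ 2) (φ : ℝ) : 0 < 1 - (m * M * Real.cos φ + n * N) ^ 2 := by
  by_cases hφ : Real.sin φ = 0
  · have hcos : Real.cos φ ^ 2 = 1 := by simpa [hφ] using Real.sin_sq_add_cos_sq φ
    have hne : m * N ≠ n * M * Real.cos φ := fun h => by
      have := congrArg (· ^ 2) h
      simp only [mul_pow, hcos] at this
      nlinarith
    rw [one_sub_phase_sq hmn hMN]
    have := sub_ne_zero.2 hne
    positivity
  · have hM : M ≠ 0 := fun h => by nlinarith [sq_nonneg m]
    exact one_sub_phase_sq_pos_of_sin_ne_zero hmn hMN hM hφ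

/- In the spherical triangle with two sides of sines `m`, `M` enclosing the angle `φ`, the altitude
on the third side `θ` cuts `φ` into `y + z` with `n M cos z = m N cos y`, and `dθ/dφ` is `m` times
the sine of the angle between the first and the third side. -/
lemma velocity_add_sq (hmn : m ^ 2 + n ^ 2 = 1) (hMN : M ^ 2 + N ^ 2 = 1) (hm : m ^ 2 < 1)
    {y z : ℝ} (hyz : n * M * Real.cos z = m * N * Real.cos y)
    (hT : 0 < 1 - (m * M * Real.cos (y + z) + n * N) ^ 2) :
    velocity (m * M) (n * N) (y + z) ^ 2 = konnoParam m y ^ 2 := by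
  have hn : n ^ 2 ≠ 0 := by linarith
  have hD := one_sub_sq_mul_sin_sq_pos hm y
  have hcs := Real.sin_sq_add_cos_sq y
  rw [velocity_sq hT, konnoParam_sq hm, div_eq_div_iff hT.ne' hD.ne']
  have hsin : n * M * Real.sin (y + z) =
      Real.cos y * (m * N * Real.sin y + n * M * Real.sin z) := by
    rw [Real.sin_add]
    linear_combination Real.sin y * hyz
  have hcos : n * (m * M * Real.cos (y + z) + n * N) =
      N * (1 - m ^ 2 * Real.sin y ^ 2) - m * (n * M * Real.sin z) * Real.sin y := by
    rw [Real.cos_add]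
    linear_combination m * Real.cos y * hyz + N * hmn + m ^ 2 * N * hcs
  have hsq : (n * M * Real.sin z) ^ 2 = n ^ 2 * M ^ 2 - m ^ 2 * N ^ 2 * Real.cos y ^ 2 := by
    linear_combination n ^ 2 * M ^ 2 * Real.sin_sq_add_cos_sq z -
      (n * M * Real.cos z + m * N * Real.cos y) * hyz
  generalize m * M * Real.cos (y + z) + n * N = T at *
  generalize n * M * Real.sin z = Z at *
  set c := Real.cos y
  set s := Real.sin y
  have key : (m * N * s + Z) ^ 2 * (1 - m ^ 2 * s ^ 2) =
      n ^ 2 - (N * (1 - m ^ 2 * s ^ 2) - m * Z * s) ^ 2 := by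
    linear_combination hsq + n ^ 2 * hMN - N ^ 2 * hmn - m ^ 2 * N ^ 2 * hcs
  refine mul_left_cancel₀ hn ?_
  calc n ^ 2 * ((m * M * Real.sin (y + z)) ^ 2 * (1 - m ^ 2 * s ^ 2))
      = m ^ 2 * (n * M * Real.sin (y + z)) ^ 2 * (1 - m ^ 2 * s ^ 2) := by ring
    _ = m ^ 2 * c ^ 2 * ((m * N * s + Z) ^ 2 * (1 - m ^ 2 * s ^ 2)) := by rw [hsin]; ring
    _ = m ^ 2 * c ^ 2 * (n ^ 2 - (n * T) ^ 2) := by rw [key, hcos]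
    _ = n ^ 2 * (m ^ 2 * c ^ 2 * (1 - T ^ 2)) := by ring

lemma one_sub_mul_cos_sq_pos {r : ℝ} (hr : r ^ 2 < 1) (y : ℝ) : 0 < 1 - (r * Real.cos y) ^ 2 := by
  nlinarith [mul_le_mul_of_nonneg_left (Real.cos_sq_le_one y) (sq_nonneg r)]

lemma cos_arccos_mul_cos {r : ℝ} (hr : r ^ 2 < 1) (y : ℝ) :
    Real.cos (Real.arccos (r * Real.cos y)) = r * Real.cos y := by
  obtain ⟨hlo, hhi⟩ :=
    abs_lt.1 ((sq_lt_one_iff_abs_lt_one _).1 (sub_pos.1 (one_sub_mul_cos_sq_pos hr y)))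
  exact Real.cos_arccos hlo.le hhi.le

lemma hasDerivAt_add_arccos_mul_cos {r : ℝ} (hr : r ^ 2 < 1) (y : ℝ) :
    HasDerivAt (fun y => y + Real.arccos (r * Real.cos y))
      (1 + r * Real.sin y / √(1 - (r * Real.cos y) ^ 2)) y := by
  obtain ⟨hlo, hhi⟩ :=
    abs_lt.1 ((sq_lt_one_iff_abs_lt_one _).1 (sub_pos.1 (one_sub_mul_cos_sq_pos hr y)))
  have harccos := (Real.hasDerivAt_arccos hlo.ne' hhi.ne).comp y
    ((Real.hasDerivAt_cos y).const_mul r)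
  convert! (hasDerivAt_id y).add harccos using 1
  ring

section Even

variable {X : Type*} {F : ℝ → X}

lemma even_apply_eq_of_sq_eq (heven : F.Even) {x y : ℝ} (h : x ^ 2 = y ^ 2) : F x = F y := by
  rcases sq_eq_sq_iff_eq_or_eq_neg.1 h with rfl | rfl
  exacts [rfl, heven y]

lemma even_comp_konnoParam_periodic (heven : F.Even) (m : ℝ) :
    Function.Periodic (fun y => F (konnoParam m y)) π := fun y => by
  simp only [konnoParam_add_pi, heven _]

lemma even_comp_velocity_two_pi_sub (heven : F.Even) (p q φ : ℝ) :
    F (velocity p q (2 * π - φ)) = F (velocity p q φ) := by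
  rw [(velocity_periodic p q).sub_eq', velocity_neg, heven]

end Even

variable {E : Type*} [NormedAddCommGroup E] [NormedSpace ℝ E] {F : ℝ → E}

lemma integral_comp_two_mul_of_symm {f : ℝ → E} {a : ℝ} (hf : Continuous f)
    (hsymm : ∀ x, f (2 * a - x) = f x) :
    ∫ x in (0 : ℝ)..a, f (2 * x) = ∫ x in (0 : ℝ)..a, f x := by
  have hreflect : ∫ x in a..2 * a, f x = ∫ x in (0 : ℝ)..a, f x := by
    have h := intervalIntegral.integral_comp_sub_left f (2 * a) (a := 0) (b := a)
    simp only [hsymm, sub_zero] at h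
    rw [h]
    congr 1
    ring
  rw [intervalIntegral.integral_comp_mul_left f two_ne_zero, mul_zero,
    ← intervalIntegral.integral_add_adjacent_intervals (hf.intervalIntegrable 0 a)
      (hf.intervalIntegrable a (2 * a)), hreflect, ← two_smul ℝ, inv_smul_smul₀ two_ne_zero]

lemma integral_zero_pi_eq_integral_comp_add_arccos {r : ℝ} (hr : r ^ 2 < 1) {f : ℝ → E}
    (hf : Continuous f) (heven : Function.Even fun y => f (y + Real.arccos (r * Real.cos y))) :
    ∫ φ in (0 : ℝ)..π, f φ =
      ∫ y in -(π / 2)..π / 2, f (y + Real.arccos (r * Real.cos y)) := by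
  set g : ℝ → E := fun y => f (y + Real.arccos (r * Real.cos y))
  set w : ℝ → ℝ := fun y => r * Real.sin y / √(1 - (r * Real.cos y) ^ 2)
  have hg : Continuous g := by fun_prop
  have hw : Continuous w :=
    Continuous.div (by fun_prop) (by fun_prop) fun y =>
      (Real.sqrt_pos.2 (one_sub_mul_cos_sq_pos hr y)).ne'
  have hwg : Continuous fun y => w y • g y := hw.smul hg
  have hodd : Function.Odd fun y => w y • g y := fun y => by
    simp only [heven y, w, Real.cos_neg, Real.sin_neg, mul_neg, neg_div, neg_smul]
  calc ∫ φ in (0 : ℝ)..π, f φ = ∫ y in -(π / 2)..π / 2, (1 + w y) • g y := by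
        have h := intervalIntegral.integral_deriv_smul_comp (a := -(π / 2)) (b := π / 2)
          (fun y _ => hasDerivAt_add_arccos_mul_cos hr y)
          (continuous_const.add hw).continuousOn hf
        simpa using h.symm
    _ = ∫ y in -(π / 2)..π / 2, g y := by
        simp only [add_smul, one_smul]
        rw [intervalIntegral.integral_add (hg.intervalIntegrable _ _)
          (hwg.intervalIntegrable _ _), integral_neg_self_eq_zero_of_odd hodd, add_zero]

lemma integral_comp_velocity_of_sq_lt_sq (hmn : m ^ 2 + n ^ 2 = 1) (hMN : M ^ 2 + N ^ 2 = 1)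
    (hlt : m ^ 2 < M ^ 2) (hF : Continuous F) (heven : F.Even) :
    ∫ k in (0 : ℝ)..π, F (velocity (m * M) (n * N) (2 * k)) =
      ∫ y in (0 : ℝ)..π, F (konnoParam m y) := by
  obtain ⟨r, hr, hr1⟩ : ∃ r, n * M * r = m * N ∧ r ^ 2 < 1 := by
    have hsq : (m * N) ^ 2 < (n * M) ^ 2 := by nlinarith
    have hne : n * M ≠ 0 := fun h => by nlinarith [sq_nonneg (m * N)]
    exact ⟨m * N / (n * M), mul_div_cancel₀ _ hne, by
      rw [div_pow]; exact (div_lt_one (by positivity)).2 hsq⟩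
  have hpos := one_sub_phase_sq_pos_of_sq_lt_sq hmn hMN hlt
  have hV : Continuous fun φ => F (velocity (m * M) (n * N) φ) :=
    hF.comp (Continuous.div (by fun_prop) (by fun_prop) fun φ => (Real.sqrt_pos.2 (hpos φ)).ne')
  have hvel : ∀ y, F (velocity (m * M) (n * N) (y + Real.arccos (r * Real.cos y))) =
      F (konnoParam m y) := fun y =>
    even_apply_eq_of_sq_eq heven (velocity_add_sq hmn hMN (by nlinarith [sq_nonneg N])
      (by rw [cos_arccos_mul_cos hr1, ← mul_assoc, hr]) (hpos _))
  calc ∫ k in (0 : ℝ)..π, F (velocity (m * M) (n * N) (2 * k))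
      = ∫ φ in (0 : ℝ)..π, F (velocity (m * M) (n * N) φ) :=
        integral_comp_two_mul_of_symm hV (even_comp_velocity_two_pi_sub heven _ _)
    _ = ∫ y in -(π / 2)..π / 2, F (konnoParam m y) := by
        rw [integral_zero_pi_eq_integral_comp_add_arccos hr1 hV] <;> simp only [hvel]
        exact fun y => by simp only [konnoParam_neg]
    _ = ∫ y in (0 : ℝ)..π, F (konnoParam m y) := by
        have h := (even_comp_konnoParam_periodic heven m).intervalIntegral_add_eq (-(π / 2)) 0
        rwa [zero_add, show -(π / 2) + π = π / 2 by ring] at h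

lemma integral_comp_velocity_of_sq_eq_sq (hmn : m ^ 2 + n ^ 2 = 1) (hMN : M ^ 2 + N ^ 2 = 1)
    (hm : m ^ 2 < 1) (hM : M ≠ 0) (heq : m ^ 2 = M ^ 2) (heven : F.Even) :
    ∫ k in (0 : ℝ)..π, F (velocity (m * M) (n * N) (2 * k)) =
      ∫ y in (0 : ℝ)..π, F (konnoParam m y) := by
  have hvel : ∀ᵐ k : ℝ, ∀ y z, 2 * k = y + z → n * M * Real.cos z = m * N * Real.cos y →
      F (velocity (m * M) (n * N) (2 * k)) = F (konnoParam m y) := by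
    filter_upwards [ae_sin_two_mul_ne_zero] with k hk y z hsum hyz
    have hpos := one_sub_phase_sq_pos_of_sin_ne_zero hmn hMN hM hk
    rw [hsum] at hpos ⊢
    exact even_apply_eq_of_sq_eq heven (velocity_add_sq hmn hMN hm hyz hpos)
  have hsq : (n * M) ^ 2 = (m * N) ^ 2 := by
    linear_combination n ^ 2 * (-heq) + m ^ 2 * (hmn - hMN) + m ^ 2 * (-heq)
  rcases sq_eq_sq_iff_eq_or_eq_neg.1 hsq with h | h
  · refine intervalIntegral.integral_congr_ae (hvel.mono fun k hk _ => ?_)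
    exact hk k k (by ring) (by rw [h])
  · calc ∫ k in (0 : ℝ)..π, F (velocity (m * M) (n * N) (2 * k))
        = ∫ k in (0 : ℝ)..π, F (konnoParam m (k - π / 2)) := by
          refine intervalIntegral.integral_congr_ae (hvel.mono fun k hk _ => ?_)
          refine hk (k - π / 2) (k + π / 2) (by ring) ?_
          rw [Real.cos_sub_pi_div_two, Real.cos_add_pi_div_two, h]
          ring
      _ = ∫ y in (0 : ℝ)..π, F (konnoParam m y) := by
          have hper := (even_comp_konnoParam_periodic heven m).intervalIntegral_add_eq
            (0 - π / 2) 0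
          rw [intervalIntegral.integral_comp_sub_right (fun y => F (konnoParam m y)),
            show π - π / 2 = 0 - π / 2 + π by ring, hper, zero_add]

lemma integral_add_neg_comp_velocity_of_sq_le_sq (hmn : m ^ 2 + n ^ 2 = 1)
    (hMN : M ^ 2 + N ^ 2 = 1) (hm0 : m ≠ 0) (hm : m ^ 2 < 1) (hle : m ^ 2 ≤ M ^ 2) {h : ℝ → E}
    (hh : Continuous h) :
    ∫ k in (0 : ℝ)..π, (h (velocity (m * M) (n * N) (2 * k)) +
        h (-velocity (m * M) (n * N) (2 * k))) =
      (2 * π) • ∫ x, konnoDensity |m| x • h x := by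
  have heven : Function.Even fun x => h x + h (-x) := fun x => by
    simp only [neg_neg, add_comm]
  have habs : |m| ^ 2 < 1 := by rwa [sq_abs]
  have hK : Continuous fun y => h (konnoParam |m| y) := hh.comp (continuous_konnoParam habs)
  have hK' : Continuous fun y => h (-konnoParam |m| y) :=
    hh.comp (continuous_konnoParam habs).neg
  calc ∫ k in (0 : ℝ)..π, (h (velocity (m * M) (n * N) (2 * k)) +
        h (-velocity (m * M) (n * N) (2 * k)))
      = ∫ y in (0 : ℝ)..π, (h (konnoParam m y) + h (-konnoParam m y)) := by
        rcases hle.lt_or_eq with hlt | heq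
        · exact integral_comp_velocity_of_sq_lt_sq hmn hMN hlt (by fun_prop) heven
        · have hM : M ≠ 0 := fun hM => hm0 (by simpa [hM] using heq)
          exact integral_comp_velocity_of_sq_eq_sq hmn hMN hm hM heq heven
    _ = ∫ y in (0 : ℝ)..π, (h (konnoParam |m| y) + h (-konnoParam |m| y)) := by
        rcases abs_choice m with habs | habs <;> simp only [habs, konnoParam_neg_left, neg_neg]
        simp only [add_comm]
    _ = (2 : ℝ) • ∫ y in (0 : ℝ)..π, h (konnoParam |m| y) := by
        have hreflect := intervalIntegral.integral_comp_sub_left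
          (fun y => h (konnoParam |m| y)) π (a := 0) (b := π)
        simp only [konnoParam_pi_sub, sub_zero, sub_self] at hreflect
        rw [intervalIntegral.integral_add (hK.intervalIntegrable _ _)
          (hK'.intervalIntegrable _ _), hreflect, two_smul]
    _ = (2 * π) • ∫ x, konnoDensity |m| x • h x := by
        rw [integral_konnoDensity_smul (abs_pos.2 hm0) habs, smul_smul, mul_assoc,
          mul_inv_cancel₀ Real.pi_ne_zero, mul_one]

lemma integral_add_neg_comp_velocity (hmn : m ^ 2 + n ^ 2 = 1) (hMN : M ^ 2 + N ^ 2 = 1)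
    (hm0 : m ≠ 0) (hM0 : M ≠ 0) (hmin : min |m| |M| < 1) {h : ℝ → E} (hh : Continuous h) :
    ∫ k in (0 : ℝ)..π, (h (velocity (m * M) (n * N) (2 * k)) +
        h (-velocity (m * M) (n * N) (2 * k))) =
      (2 * π) • ∫ x, konnoDensity (min |m| |M|) x • h x := by
  rcases le_total |m| |M| with hle | hle
  · rw [min_eq_left hle] at hmin ⊢
    exact integral_add_neg_comp_velocity_of_sq_le_sq hmn hMN hm0
      ((sq_lt_one_iff_abs_lt_one _).2 hmin) (sq_le_sq.2 hle) hh
  · rw [min_eq_right hle] at hmin ⊢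
    rw [mul_comm m, mul_comm n]
    exact integral_add_neg_comp_velocity_of_sq_le_sq hMN hmn hM0
      ((sq_lt_one_iff_abs_lt_one _).2 hmin) (sq_le_sq.2 hle) hh

end VelocityLaw

section LatticeFourier

/-- Fourier series of an amplitude on `ℤ`, with the sign convention that turns the shift
`f ↦ f (· + 1)` into multiplication by `e^{ik}`. -/
def latticeFourier (f : ℤ → ℂ) (k : ℝ) : ℂ :=
  ∑' x : ℤ, exp (-(I * k * x)) * f x

lemma latticeFourier_comp_add_right (f : ℤ → ℂ) (c : ℤ) (k : ℝ) :
    latticeFourier (fun x => f (x + c)) k = exp (I * k * c) * latticeFourier f k := by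
  rw [latticeFourier, latticeFourier, ← tsum_mul_left,
    ← (Equiv.addRight c).tsum_eq fun x : ℤ => exp (I * k * c) * (exp (-(I * k * x)) * f x)]
  refine tsum_congr fun x => ?_
  rw [Equiv.coe_addRight, ← mul_assoc, ← Complex.exp_add]
  congr 2
  push_cast
  ring

lemma latticeFourier_sub (f : ℤ → ℂ) (k ε : ℝ) :
    latticeFourier f (k - ε) = latticeFourier (fun x => exp (I * ε * x) * f x) k := by
  refine tsum_congr fun x => ?_
  rw [← mul_assoc, ← Complex.exp_add]
  congr 2
  push_cast
  ring

lemma latticeFourier_eq_sum {f : ℤ → ℂ} {s : Finset ℤ} (hs : f.support ⊆ s) (k : ℝ) :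
    latticeFourier f k = ∑ x ∈ s, exp (-(I * k * x)) * f x :=
  tsum_eq_sum fun x hx => by rw [Function.notMem_support.1 fun h => hx (hs h), mul_zero]

lemma latticeFourier_linear_combination {f g : ℤ → ℂ} (hf : f.support.Finite)
    (hg : g.support.Finite) (a b : ℂ) (k : ℝ) :
    latticeFourier (fun x => a * f x + b * g x) k =
      a * latticeFourier f k + b * latticeFourier g k := by
  classical
  set s := hf.toFinset ∪ hg.toFinset
  have hfs : f.support ⊆ s := by simp [s]
  have hgs : g.support ⊆ s := by simp [s]
  have hs : Function.support (fun x => a * f x + b * g x) ⊆ s :=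
    Function.support_subset_iff'.2 fun x hx => by
      rw [Function.notMem_support.1 fun h => hx (hfs h),
        Function.notMem_support.1 fun h => hx (hgs h), mul_zero, mul_zero, add_zero]
  rw [latticeFourier_eq_sum hs, latticeFourier_eq_sum hfs, latticeFourier_eq_sum hgs,
    Finset.mul_sum, Finset.mul_sum, ← Finset.sum_add_distrib]
  exact Finset.sum_congr rfl fun x _ => by ring

lemma continuous_latticeFourier {f : ℤ → ℂ} (hf : f.support.Finite) :
    Continuous (latticeFourier f) := by
  rw [funext (latticeFourier_eq_sum hf.coe_toFinset.ge)]
  fun_prop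

lemma integral_exp_I_mul_int (n : ℤ) :
    ∫ k in -π..π, exp (I * n * k) = if n = 0 then 2 * (π : ℂ) else 0 := by
  split_ifs with h
  · simp [h, two_mul]
  · have hperiod : exp (I * n * π) = exp (I * n * (-π : ℝ)) :=
      Complex.exp_eq_exp_iff_exists_int.2 ⟨n, by push_cast; ring⟩
    rw [integral_exp_mul_complex (mul_ne_zero I_ne_zero (Int.cast_ne_zero.2 h)), hperiod,
      sub_self, zero_div]

lemma integral_conj_latticeFourier_mul_latticeFourier {f g : ℤ → ℂ} (hf : f.support.Finite)
    (hg : g.support.Finite) :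
    ∫ k in -π..π, conj (latticeFourier f k) * latticeFourier g k =
      2 * π * ∑' x, conj (f x) * g x := by
  classical
  have hexpand : ∀ k : ℝ, conj (latticeFourier f k) * latticeFourier g k =
      ∑ x ∈ hf.toFinset, ∑ y ∈ hg.toFinset,
        conj (f x) * g y * exp (I * ((x - y : ℤ) : ℂ) * k) := fun k => by
    rw [latticeFourier_eq_sum hf.coe_toFinset.ge, latticeFourier_eq_sum hg.coe_toFinset.ge,
      map_sum, Finset.sum_mul_sum]
    refine Finset.sum_congr rfl fun x _ => Finset.sum_congr rfl fun y _ => ?_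
    have hexp : exp (I * ((x - y : ℤ) : ℂ) * k) =
        exp (conj (-(I * k * x))) * exp (-(I * k * y)) := by
      rw [← Complex.exp_add]
      congr 1
      simp only [map_neg, map_mul, conj_I, conj_ofReal, map_intCast, Int.cast_sub]
      ring
    rw [hexp, map_mul, ← Complex.exp_conj]
    ring
  have htsum : ∑' x, conj (f x) * g x = ∑ x ∈ hf.toFinset, conj (f x) * g x :=
    tsum_eq_sum fun x hx => by
      rw [Function.notMem_support.1 fun h => hx (hf.mem_toFinset.2 h), map_zero, zero_mul]
  simp only [hexpand]
  rw [intervalIntegral.integral_finsetSum fun x _ =>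
    Continuous.intervalIntegrable (by fun_prop) _ _, htsum, Finset.mul_sum]
  refine Finset.sum_congr rfl fun x _ => ?_
  rw [intervalIntegral.integral_finsetSum fun y _ =>
    Continuous.intervalIntegrable (by fun_prop) _ _]
  simp only [intervalIntegral.integral_const_mul, integral_exp_I_mul_int, sub_eq_zero, mul_ite,
    mul_zero, Finset.sum_ite_eq, Set.Finite.mem_toFinset, Function.mem_support]
  split_ifs with hx
  · ring
  · rw [not_not.1 hx, mul_zero, mul_zero]

end LatticeFourier

section Expectation

variable {n : Type*} [Fintype n]

/-- Quantum expectation `⟨φ, A φ⟩` of a matrix `A` in the (not necessarily normalized) state `φ`. -/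
def expectation (φ : n → ℂ) : Matrix n n ℂ →ₗ[ℂ] ℂ where
  toFun A := star φ ⬝ᵥ A *ᵥ φ
  map_add' A B := by rw [Matrix.add_mulVec, dotProduct_add]
  map_smul' c A := by rw [Matrix.smul_mulVec, dotProduct_smul, RingHom.id_apply]

lemma expectation_one [DecidableEq n] (φ : n → ℂ) : expectation φ 1 = star φ ⬝ᵥ φ :=
  congrArg (star φ ⬝ᵥ ·) (Matrix.one_mulVec φ)

lemma expectation_conjTranspose_mul (φ : n → ℂ) (A B : Matrix n n ℂ) :
    expectation φ (Aᴴ * B) = star (A *ᵥ φ) ⬝ᵥ B *ᵥ φ := by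
  simp only [expectation, LinearMap.coe_mk, AddHom.coe_mk]
  rw [← Matrix.mulVec_mulVec, Matrix.dotProduct_mulVec, Matrix.star_mulVec]

lemma continuous_expectation (φ : n → ℂ) : Continuous (expectation φ) :=
  LinearMap.continuous_of_finiteDimensional _

open scoped Matrix.Norms.L2Operator in
lemma norm_expectation_le [DecidableEq n] {φ : n → ℂ} (hφ : star φ ⬝ᵥ φ = 1) (A : Matrix n n ℂ) :
    ‖expectation φ A‖ ≤ ‖A‖ := by
  set v : EuclideanSpace ℂ n := WithLp.toLp 2 φ
  set w : EuclideanSpace ℂ n := WithLp.toLp 2 (A *ᵥ φ)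
  have hinner : expectation φ A = inner ℂ v w := by
    rw [EuclideanSpace.inner_eq_star_dotProduct, dotProduct_comm]
    rfl
  have hv : ‖v‖ = 1 := by
    have h : inner ℂ v v = 1 := by
      rw [EuclideanSpace.inner_eq_star_dotProduct, dotProduct_comm]
      exact hφ
    rw [norm_eq_sqrt_re_inner (𝕜 := ℂ), h, RCLike.one_re, Real.sqrt_one]
  calc ‖expectation φ A‖ ≤ ‖v‖ * ‖w‖ := hinner ▸ norm_inner_le_norm v w
    _ ≤ ‖v‖ * (‖A‖ * ‖v‖) := by gcongr; exact Matrix.l2_opNorm_mulVec A v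
    _ = ‖A‖ := by rw [hv, one_mul, mul_one]

end Expectation

section FourierWalk

variable {U : ℕ → Matrix (Fin 2) (Fin 2) ℂ} {α β : ℂ} {ψ : ℕ → ℤ → Fin 2 → ℂ} {t : ℕ}

lemma qwProb_nonneg (ψ : ℕ → ℤ → Fin 2 → ℂ) (t : ℕ) (x : ℤ) : 0 ≤ qwProb ψ t x :=
  add_nonneg (normSq_nonneg _) (normSq_nonneg _)

lemma QWEvolves.finite_support (hevol : QWEvolves U ψ) (hinit : QWInit α β ψ) (t : ℕ)
    (i : Fin 2) : (Function.support fun x => ψ t x i).Finite := by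
  induction t generalizing i with
  | zero =>
    refine (Set.finite_singleton 0).subset (Function.support_subset_iff'.2 fun x hx => ?_)
    fin_cases i
    exacts [(hinit.2.2 x hx).1, (hinit.2.2 x hx).2]
  | succ t ih =>
    set S := (Function.support fun x => ψ t x 0) ∪ Function.support fun x => ψ t x 1
    have hS : S.Finite := (ih 0).union (ih 1)
    have hzero : ∀ x ∉ S, ψ t x 0 = 0 ∧ ψ t x 1 = 0 := fun x hx =>
      ⟨of_not_not fun h => hx (.inl h), of_not_not fun h => hx (.inr h)⟩
    fin_cases i
    · refine (hS.preimage (add_left_injective 1).injOn).subset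
        (Function.support_subset_iff'.2 fun x hx => ?_)
      rw [Fin.zero_eta, (hevol t x).1, (hzero _ hx).1, (hzero _ hx).2, mul_zero, mul_zero, add_zero]
    · refine (hS.preimage (sub_left_injective (b := 1)).injOn).subset
        (Function.support_subset_iff'.2 fun x hx => ?_)
      rw [Fin.mk_one, (hevol t x).2, (hzero _ hx).1, (hzero _ hx).2, mul_zero, mul_zero, add_zero]

/-- The state of the walk at time `t` in momentum space, taken componentwise. -/
def qwFourier (ψ : ℕ → ℤ → Fin 2 → ℂ) (t : ℕ) (k : ℝ) : Fin 2 → ℂ :=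
  fun i => latticeFourier (fun x => ψ t x i) k

lemma QWInit.qwFourier_zero (hinit : QWInit α β ψ) (k : ℝ) : qwFourier ψ 0 k = ![α, β] := by
  obtain ⟨hα, hβ, hzero⟩ := hinit
  ext i
  rw [qwFourier, latticeFourier, tsum_eq_single 0 fun x hx => by
    fin_cases i <;> simp [hzero x hx]]
  fin_cases i <;> simp [hα, hβ]

lemma QWEvolves.qwFourier_succ (hevol : QWEvolves U ψ) (hinit : QWInit α β ψ) (t : ℕ) (k : ℝ) :
    qwFourier ψ (t + 1) k = (Rmat k * U t) *ᵥ qwFourier ψ t k := by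
  have hfin := hevol.finite_support hinit t
  have htop : qwFourier ψ (t + 1) k 0 =
      exp (I * k) * (U t 0 0 * qwFourier ψ t k 0 + U t 0 1 * qwFourier ψ t k 1) := by
    have h := latticeFourier_comp_add_right
      (fun x => U t 0 0 * ψ t x 0 + U t 0 1 * ψ t x 1) 1 k
    rw [latticeFourier_linear_combination (hfin 0) (hfin 1), Int.cast_one, mul_one] at h
    simp only [qwFourier, ← h, (hevol t _).1]
  have hbot : qwFourier ψ (t + 1) k 1 =
      exp (-(I * k)) * (U t 1 0 * qwFourier ψ t k 0 + U t 1 1 * qwFourier ψ t k 1) := by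
    have h := latticeFourier_comp_add_right
      (fun x => U t 1 0 * ψ t x 0 + U t 1 1 * ψ t x 1) (-1) k
    rw [latticeFourier_linear_combination (hfin 0) (hfin 1), Int.cast_neg, Int.cast_one,
      mul_neg_one] at h
    simp only [qwFourier, ← h, (hevol t _).2, sub_eq_add_neg]
  ext i
  fin_cases i
  · simp only [Fin.zero_eta, htop, Rmat, Matrix.mul_apply, Matrix.mulVec, dotProduct,
      Fin.sum_univ_two, Matrix.of_apply, Matrix.cons_val', Matrix.cons_val_fin_one,
      Matrix.cons_val_zero, Matrix.cons_val_one]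
    ring
  · simp only [Fin.mk_one, hbot, Rmat, Matrix.mul_apply, Matrix.mulVec, dotProduct,
      Fin.sum_univ_two, Matrix.of_apply, Matrix.cons_val', Matrix.cons_val_fin_one,
      Matrix.cons_val_zero, Matrix.cons_val_one]
    ring

/-- The time evolution operator of a walk with coins `U` over the first `t` steps, at
momentum `k`. -/
def propagator (U : ℕ → Matrix (Fin 2) (Fin 2) ℂ) : ℕ → ℝ → Matrix (Fin 2) (Fin 2) ℂ
  | 0, _ => 1
  | t + 1, k => Rmat k * U t * propagator U t k

lemma QWEvolves.qwFourier_eq_propagator_mulVec (hevol : QWEvolves U ψ) (hinit : QWInit α β ψ)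
    (t : ℕ) (k : ℝ) : qwFourier ψ t k = propagator U t k *ᵥ ![α, β] := by
  induction t with
  | zero => rw [hinit.qwFourier_zero, propagator, Matrix.one_mulVec]
  | succ t ih => rw [hevol.qwFourier_succ hinit, ih, propagator, Matrix.mulVec_mulVec]

lemma continuous_Rmat : Continuous Rmat := by
  refine continuous_matrix fun i j => ?_
  fin_cases i <;> fin_cases j
  · exact Complex.continuous_exp.comp (by fun_prop)
  · exact continuous_const
  · exact continuous_const
  · exact Complex.continuous_exp.comp (by fun_prop)

lemma Rmat_mem_unitaryGroup (k : ℝ) : Rmat k ∈ Matrix.unitaryGroup (Fin 2) ℂ := by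
  have hexp : exp (I * k) * exp (-(I * k)) = 1 := by
    rw [← Complex.exp_add, add_neg_cancel, Complex.exp_zero]
  have hconj : conj (exp (I * k)) = exp (-(I * k)) := by
    rw [← Complex.exp_conj, map_mul, conj_I, conj_ofReal, neg_mul]
  have hconj' : conj (exp (-(I * k))) = exp (I * k) := by
    rw [← Complex.exp_conj, map_neg, map_mul, conj_I, conj_ofReal, neg_mul, neg_neg]
  rw [Matrix.mem_unitaryGroup_iff, Matrix.star_eq_conjTranspose]
  ext i j
  fin_cases i <;> fin_cases j <;>
    simp [Rmat, Matrix.mul_apply, hexp, hconj, hconj', mul_comm]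

lemma continuous_propagator (U : ℕ → Matrix (Fin 2) (Fin 2) ℂ) (t : ℕ) :
    Continuous (propagator U t) := by
  induction t with
  | zero => exact continuous_const
  | succ t ih => exact (continuous_Rmat.mul continuous_const).mul ih

lemma propagator_mem_unitaryGroup (hU : ∀ t, U t ∈ Matrix.unitaryGroup (Fin 2) ℂ) (t : ℕ)
    (k : ℝ) : propagator U t k ∈ Matrix.unitaryGroup (Fin 2) ℂ := by
  induction t with
  | zero => exact one_mem _
  | succ t ih => exact mul_mem (mul_mem (Rmat_mem_unitaryGroup k) (hU t)) ih

lemma charFun_qwMeasure_eq_tsum (hfin : ∀ i, (Function.support fun x => ψ t x i).Finite) (ξ : ℝ) :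
    charFun (qwMeasure ψ t) ξ = ∑' x : ℤ, exp (I * (ξ / t : ℝ) * x) * qwProb ψ t x := by
  have hsupport : (Function.support (qwProb ψ t)).Finite :=
    ((hfin 0).union (hfin 1)).subset <| Function.support_subset_iff'.2 fun x hx => by
      have h0 : ψ t x 0 = 0 := of_not_not fun h => hx (.inl h)
      have h1 : ψ t x 1 = 0 := of_not_not fun h => hx (.inr h)
      rw [qwProb, h0, h1, map_zero, add_zero]
  rw [charFun_apply_real, qwMeasure, integral_sum_dirac_eq_tsum fun _ => ENNReal.ofReal_ne_top]
  · refine tsum_congr fun x => ?_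
    rw [ENNReal.toReal_ofReal (qwProb_nonneg ψ t x), real_smul, mul_comm]
    congr 2
    push_cast
    ring
  · refine summable_of_ne_finset_zero (s := hsupport.toFinset) fun x hx => ?_
    rw [of_not_not fun h => hx (hsupport.mem_toFinset.2 h)]
    simp

lemma integral_star_qwFourier_dotProduct_qwFourier_sub
    (hfin : ∀ i, (Function.support fun x => ψ t x i).Finite) (ε : ℝ) :
    ∫ k in -π..π, star (qwFourier ψ t k) ⬝ᵥ qwFourier ψ t (k - ε) =
      2 * π * ∑' x : ℤ, exp (I * ε * x) * qwProb ψ t x := by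
  have hshift : ∀ i, (Function.support fun x : ℤ => exp (I * ε * x) * ψ t x i).Finite := fun i =>
    (hfin i).subset (Function.support_mul_subset_right _ _)
  have hcont : ∀ i, Continuous (latticeFourier fun x => ψ t x i) := fun i =>
    continuous_latticeFourier (hfin i)
  have hcont' : ∀ i, Continuous (latticeFourier fun x => exp (I * ε * x) * ψ t x i) := fun i =>
    continuous_latticeFourier (hshift i)
  have hsummable : ∀ i, Summable fun x : ℤ => conj (ψ t x i) * (exp (I * ε * x) * ψ t x i) :=
    fun i => summable_of_hasFiniteSupport <|
      (hshift i).subset (Function.support_mul_subset_right _ _)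
  simp only [dotProduct, Fin.sum_univ_two, Pi.star_apply, qwFourier, latticeFourier_sub,
    ← starRingEnd_apply]
  rw [intervalIntegral.integral_add (Continuous.intervalIntegrable (by fun_prop) _ _)
    (Continuous.intervalIntegrable (by fun_prop) _ _),
    integral_conj_latticeFourier_mul_latticeFourier (hfin 0) (hshift 0),
    integral_conj_latticeFourier_mul_latticeFourier (hfin 1) (hshift 1), ← mul_add,
    ← (hsummable 0).tsum_add (hsummable 1)]
  congr 1
  refine tsum_congr fun x => ?_
  rw [qwProb, ofReal_add, normSq_eq_conj_mul_self, normSq_eq_conj_mul_self]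
  ring

/-- The overlap `⟨W_t(k) φ, W_t(k') φ⟩` of the time evolutions of the state `φ` at momenta `k` and
`k'`, where `W_t` is the propagator. -/
def overlap (U : ℕ → Matrix (Fin 2) (Fin 2) ℂ) (φ : Fin 2 → ℂ) (t : ℕ) (k k' : ℝ) : ℂ :=
  expectation φ ((propagator U t k)ᴴ * propagator U t k')

lemma continuous_overlap_sub (U : ℕ → Matrix (Fin 2) (Fin 2) ℂ) (φ : Fin 2 → ℂ) (t : ℕ) (ε : ℝ) :
    Continuous fun k => overlap U φ t k (k - ε) :=
  (continuous_expectation φ).comp <| (continuous_propagator U t).matrix_conjTranspose.mul <|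
    (continuous_propagator U t).comp (continuous_id.sub continuous_const)

open scoped Matrix.Norms.L2Operator in
lemma norm_overlap_le_one (hU : ∀ t, U t ∈ Matrix.unitaryGroup (Fin 2) ℂ) {φ : Fin 2 → ℂ}
    (hφ : star φ ⬝ᵥ φ = 1) (t : ℕ) (k k' : ℝ) : ‖overlap U φ t k k'‖ ≤ 1 :=
  (norm_expectation_le hφ _).trans_eq <| CStarRing.norm_of_mem_unitary <|
    mul_mem (Unitary.star_mem (propagator_mem_unitaryGroup hU t k))
      (propagator_mem_unitaryGroup hU t k')

lemma overlap_self (hU : ∀ t, U t ∈ Matrix.unitaryGroup (Fin 2) ℂ) {φ : Fin 2 → ℂ}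
    (hφ : star φ ⬝ᵥ φ = 1) (t : ℕ) (k : ℝ) : overlap U φ t k k = 1 := by
  have h : (propagator U t k)ᴴ * propagator U t k = 1 :=
    Unitary.star_mul_self_of_mem (propagator_mem_unitaryGroup hU t k)
  rw [overlap, h, expectation_one, hφ]

lemma QWEvolves.charFun_qwMeasure (hevol : QWEvolves U ψ) (hinit : QWInit α β ψ) (t : ℕ) (ξ : ℝ) :
    charFun (qwMeasure ψ t) ξ =
      (2 * π : ℂ)⁻¹ * ∫ k in -π..π, overlap U ![α, β] t k (k - ξ / t) := by
  have hπ : (2 * π : ℂ) ≠ 0 := by simp [Real.pi_ne_zero]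
  have hfin := hevol.finite_support hinit t
  simp only [overlap, expectation_conjTranspose_mul, ← hevol.qwFourier_eq_propagator_mulVec hinit]
  rw [integral_star_qwFourier_dotProduct_qwFourier_sub hfin, inv_mul_cancel_left₀ hπ,
    charFun_qwMeasure_eq_tsum hfin]

lemma QWEvolves.isProbabilityMeasure_qwMeasure (hevol : QWEvolves U ψ) (hinit : QWInit α β ψ)
    (hU : ∀ t, U t ∈ Matrix.unitaryGroup (Fin 2) ℂ) (hφ : star ![α, β] ⬝ᵥ ![α, β] = 1) (t : ℕ) :
    IsProbabilityMeasure (qwMeasure ψ t) := by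
  have hπ : (2 * π : ℂ) ≠ 0 := by simp [Real.pi_ne_zero]
  have h : charFun (qwMeasure ψ t) 0 = 1 := by
    rw [hevol.charFun_qwMeasure hinit, zero_div]
    simp only [sub_zero, overlap_self hU hφ, intervalIntegral.integral_const, real_smul, mul_one]
    push_cast
    rw [sub_neg_eq_add, ← two_mul, inv_mul_cancel₀ hπ]
  rw [charFun_zero, ofReal_eq_one] at h
  exact ⟨(ENNReal.toReal_eq_one_iff _).1 h⟩

end FourierWalk

section Rotation

section Algebra

variable {A : Type*} [Ring A] [Algebra ℝ A] {J : A}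

/-- The element `cos θ + sin θ J` of a real algebra; when `J² = -1` it is the exponential `e^{θJ}`
and represents a rotation by the angle `θ`. -/
def planeRotation (J : A) (θ : ℝ) : A := Real.cos θ • 1 + Real.sin θ • J

lemma planeRotation_zero (J : A) : planeRotation J 0 = 1 := by simp [planeRotation]

lemma planeRotation_mul_planeRotation (hJ : J * J = -1) (θ φ : ℝ) :
    planeRotation J θ * planeRotation J φ = planeRotation J (θ + φ) := by
  simp only [planeRotation, Real.cos_add, Real.sin_add, add_mul, mul_add, smul_mul_smul_comm,
    mul_one, one_mul, hJ]
  module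

lemma planeRotation_pow (hJ : J * J = -1) (θ : ℝ) (s : ℕ) :
    planeRotation J θ ^ s = planeRotation J (s * θ) := by
  induction s with
  | zero => rw [pow_zero, Nat.cast_zero, zero_mul, planeRotation_zero]
  | succ s ih => rw [pow_succ, ih, planeRotation_mul_planeRotation hJ, Nat.cast_succ, add_one_mul]

lemma planeRotation_neg_mul_planeRotation (hJ : J * J = -1) (J' : A) (θ θ' : ℝ) :
    planeRotation J (-θ) * planeRotation J' θ' =
      planeRotation J (θ' - θ) + planeRotation J (-θ) * (Real.sin θ' • (J' - J)) := by
  have hsplit : planeRotation J' θ' = planeRotation J θ' + Real.sin θ' • (J' - J) := by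
    simp only [planeRotation]
    module
  rw [hsplit, mul_add, planeRotation_mul_planeRotation hJ, neg_add_eq_sub]

end Algebra

section Limit

variable {A ι : Type*} [NormedRing A] [NormedAlgebra ℝ A] {l : Filter ι}

lemma continuous_planeRotation (J : A) : Continuous (planeRotation J) := by
  unfold planeRotation
  fun_prop

lemma norm_planeRotation_le (J : A) (θ : ℝ) : ‖planeRotation J θ‖ ≤ ‖(1 : A)‖ + ‖J‖ :=
  (norm_add_le _ _).trans <| by
    rw [norm_smul, norm_smul]
    gcongr
    · exact mul_le_of_le_one_left (norm_nonneg _) (Real.abs_cos_le_one θ)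
    · exact mul_le_of_le_one_left (norm_nonneg _) (Real.abs_sin_le_one θ)

lemma tendsto_mul_sub_of_hasDerivAt {θ : ℝ → ℝ} {k θ' η : ℝ} {s κ : ι → ℝ}
    (hθ : HasDerivAt θ θ' k) (hκ : Tendsto κ l (𝓝 k))
    (hsκ : Tendsto (fun i => s i * (κ i - k)) l (𝓝 η)) :
    Tendsto (fun i => s i * (θ (κ i) - θ k)) l (𝓝 (η * θ')) := by
  have hsmall : (fun i => s i * (θ (κ i) - θ k - (κ i - k) * θ')) =o[l] fun _ => (1 : ℝ) :=
    ((Asymptotics.isBigO_refl s l).mul_isLittleO (hθ.isLittleO.comp_tendsto hκ)).trans_isBigO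
      (hsκ.isBigO_one ℝ)
  rw [← add_zero (η * θ')]
  refine ((hsκ.mul_const θ').add ((Asymptotics.isLittleO_one_iff ℝ).1 hsmall)).congr fun i => ?_
  ring

lemma tendsto_planeRotation_neg_mul_planeRotation {J : ℝ → A} {θ : ℝ → ℝ} {k θ' η : ℝ} {s κ : ι → ℝ}
    (hJ : J k * J k = -1) (hJcont : ContinuousAt J k) (hθ : HasDerivAt θ θ' k)
    (hκ : Tendsto κ l (𝓝 k)) (hsκ : Tendsto (fun i => s i * (κ i - k)) l (𝓝 η)) :
    Tendsto
      (fun i => planeRotation (J k) (-(s i * θ k)) * planeRotation (J (κ i)) (s i * θ (κ i)))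
      l (𝓝 (planeRotation (J k) (η * θ'))) := by
  have hangle : Tendsto (fun i => planeRotation (J k) (s i * θ (κ i) - s i * θ k)) l
      (𝓝 (planeRotation (J k) (η * θ'))) := by
    simp only [← mul_sub]
    exact ((continuous_planeRotation (J k)).tendsto _).comp
      (tendsto_mul_sub_of_hasDerivAt hθ hκ hsκ)
  have haxis : Tendsto (fun i => planeRotation (J k) (-(s i * θ k)) *
      (Real.sin (s i * θ (κ i)) • (J (κ i) - J k))) l (𝓝 0) := by
    have hdiff : Tendsto (fun i => (‖(1 : A)‖ + ‖J k‖) * ‖J (κ i) - J k‖) l (𝓝 0) := by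
      simpa using ((hJcont.tendsto.comp hκ).sub_const (J k)).norm.const_mul (‖(1 : A)‖ + ‖J k‖)
    refine squeeze_zero_norm (fun i => (norm_mul_le _ _).trans ?_) hdiff
    rw [norm_smul]
    gcongr
    · exact norm_planeRotation_le _ _
    · exact mul_le_of_le_one_left (norm_nonneg _) (Real.abs_sin_le_one _)
  simp only [planeRotation_neg_mul_planeRotation hJ]
  simpa only [add_zero] using hangle.add haxis

end Limit

section SpecialUnitary

variable {V : Matrix (Fin 2) (Fin 2) ℂ} {θ : ℝ}

lemma planeRotation_conjTranspose {J : Matrix (Fin 2) (Fin 2) ℂ} (hJ : Jᴴ = -J) (θ : ℝ) :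
    (planeRotation J θ)ᴴ = planeRotation J (-θ) := by
  simp only [planeRotation, Matrix.conjTranspose_add, Matrix.conjTranspose_smul, hJ,
    Matrix.conjTranspose_one, star_trivial, Real.cos_neg, Real.sin_neg, smul_neg, neg_smul]

/-- The generator `J` in the decomposition `V = cos θ + sin θ J` of an element of `SU(2)` with
eigenvalues `e^{±iθ}`; meaningful only when `sin θ ≠ 0`. -/
def rotationGenerator (V : Matrix (Fin 2) (Fin 2) ℂ) (θ : ℝ) : Matrix (Fin 2) (Fin 2) ℂ :=
  (Real.sin θ)⁻¹ • (V - Real.cos θ • 1)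

lemma planeRotation_rotationGenerator (V : Matrix (Fin 2) (Fin 2) ℂ) (hsin : Real.sin θ ≠ 0) :
    planeRotation (rotationGenerator V θ) θ = V := by
  rw [planeRotation, rotationGenerator, smul_inv_smul₀ hsin, add_sub_cancel]

lemma mul_self_eq_of_trace_eq_two_mul_cos (hdet : V.det = 1) (htrace : V.trace = 2 * Real.cos θ) :
    V * V = (2 * Real.cos θ) • V - 1 := by
  have h := V.aeval_self_charpoly
  rw [Matrix.charpoly_fin_two, hdet, htrace, ← ofReal_ofNat, ← ofReal_mul] at h
  simp only [map_add, map_sub, map_mul, map_one, Polynomial.aeval_X, Polynomial.aeval_C,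
    Algebra.algebraMap_eq_smul_one, smul_mul_assoc, one_mul, sq, Complex.coe_smul] at h
  rw [← sub_eq_zero, ← h]
  abel

lemma rotationGenerator_mul_self (hdet : V.det = 1) (htrace : V.trace = 2 * Real.cos θ)
    (hsin : Real.sin θ ≠ 0) : rotationGenerator V θ * rotationGenerator V θ = -1 := by
  have hsq : (V - Real.cos θ • 1) * (V - Real.cos θ • 1) =
      (-(Real.sin θ * Real.sin θ)) • (1 : Matrix (Fin 2) (Fin 2) ℂ) := by
    rw [← sq (Real.sin θ), Real.sin_sq]
    simp only [sub_mul, mul_sub, mul_self_eq_of_trace_eq_two_mul_cos hdet htrace, smul_mul_assoc,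
      mul_smul_comm, mul_one, one_mul]
    module
  rw [rotationGenerator, smul_mul_smul_comm, hsq, smul_smul, ← mul_inv, mul_neg,
    inv_mul_cancel₀ (mul_ne_zero hsin hsin), neg_one_smul]

lemma conjTranspose_rotationGenerator (hV : V ∈ Matrix.unitaryGroup (Fin 2) ℂ) (hdet : V.det = 1)
    (htrace : V.trace = 2 * Real.cos θ) : (rotationGenerator V θ)ᴴ = -rotationGenerator V θ := by
  have hinv : Vᴴ = (2 * Real.cos θ) • 1 - V := by
    refine left_inv_eq_right_inv (Unitary.star_mul_self_of_mem hV) ?_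
    rw [mul_sub, mul_smul_comm, mul_one, mul_self_eq_of_trace_eq_two_mul_cos hdet htrace,
      sub_sub_cancel]
  simp only [rotationGenerator, Matrix.conjTranspose_smul, Matrix.conjTranspose_sub, hinv,
    Matrix.conjTranspose_one, star_trivial]
  module

open scoped Matrix.Norms.L2Operator in
lemma tendsto_conjTranspose_pow_mul_pow {ι : Type*} {l : Filter ι}
    {V : ℝ → Matrix (Fin 2) (Fin 2) ℂ} {θ : ℝ → ℝ} {k θ' η : ℝ} {s : ι → ℕ} {κ : ι → ℝ}
    (hV : ∀ k, V k ∈ Matrix.unitaryGroup (Fin 2) ℂ) (hdet : ∀ k, (V k).det = 1)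
    (htrace : ∀ k, (V k).trace = 2 * Real.cos (θ k)) (hVcont : ContinuousAt V k)
    (hsin : Real.sin (θ k) ≠ 0) (hθ : HasDerivAt θ θ' k) (hκ : Tendsto κ l (𝓝 k))
    (hsκ : Tendsto (fun i => s i * (κ i - k)) l (𝓝 η)) :
    Tendsto (fun i => (V k ^ s i)ᴴ * V (κ i) ^ s i) l
      (𝓝 (planeRotation (rotationGenerator (V k) (θ k)) (η * θ'))) := by
  have hθcont := hθ.continuousAt
  have hJcont : ContinuousAt (fun k => rotationGenerator (V k) (θ k)) k := by
    unfold rotationGenerator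
    fun_prop (disch := assumption)
  have hpow : ∀ k, Real.sin (θ k) ≠ 0 → ∀ s : ℕ,
      V k ^ s = planeRotation (rotationGenerator (V k) (θ k)) (s * θ k) := fun k h s => by
    rw [← planeRotation_pow (rotationGenerator_mul_self (hdet k) (htrace k) h),
      planeRotation_rotationGenerator _ h]
  refine (tendsto_planeRotation_neg_mul_planeRotation
    (J := fun k => rotationGenerator (V k) (θ k))
    (rotationGenerator_mul_self (hdet k) (htrace k) hsin) hJcont hθ hκ hsκ).congr' ?_
  have hsinκ : ∀ᶠ i in l, Real.sin (θ (κ i)) ≠ 0 :=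
    ((Real.continuous_sin.continuousAt.comp hθcont).tendsto.comp hκ).eventually_ne hsin
  filter_upwards [hsinκ] with i hi
  rw [hpow k hsin, hpow _ hi,
    planeRotation_conjTranspose (conjTranspose_rotationGenerator (hV k) (hdet k) (htrace k))]

end SpecialUnitary

end Rotation

section AlternatingCoin

variable {C₀ C₁ : Matrix (Fin 2) (Fin 2) ℂ}

/-- The periodic coin sequence `C₀, C₁, C₀, C₁, …`. -/
def alternatingCoin (C₀ C₁ : Matrix (Fin 2) (Fin 2) ℂ) (t : ℕ) : Matrix (Fin 2) (Fin 2) ℂ :=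
  if Even t then C₀ else C₁

/-- The evolution of the walk with alternating coins over one period, at momentum `k`. -/
def twoStep (C₀ C₁ : Matrix (Fin 2) (Fin 2) ℂ) (k : ℝ) : Matrix (Fin 2) (Fin 2) ℂ :=
  Rmat k * C₁ * (Rmat k * C₀)

lemma alternatingCoin_mem_unitaryGroup (hC₀ : C₀ ∈ Matrix.unitaryGroup (Fin 2) ℂ)
    (hC₁ : C₁ ∈ Matrix.unitaryGroup (Fin 2) ℂ) (t : ℕ) :
    alternatingCoin C₀ C₁ t ∈ Matrix.unitaryGroup (Fin 2) ℂ := by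
  unfold alternatingCoin
  split_ifs
  exacts [hC₀, hC₁]

lemma propagator_alternatingCoin_two_mul (C₀ C₁ : Matrix (Fin 2) (Fin 2) ℂ) (s : ℕ) (k : ℝ) :
    propagator (alternatingCoin C₀ C₁) (2 * s) k = twoStep C₀ C₁ k ^ s := by
  induction s with
  | zero => rfl
  | succ s ih =>
    have heven : alternatingCoin C₀ C₁ (2 * s) = C₀ := if_pos (even_two_mul s)
    have hodd : alternatingCoin C₀ C₁ (2 * s + 1) = C₁ := if_neg (Nat.not_even_two_mul_add_one s)
    rw [mul_add_one, propagator, propagator, heven, hodd, ih, pow_succ', twoStep]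
    simp only [mul_assoc]

lemma twoStep_mem_unitaryGroup (hC₀ : C₀ ∈ Matrix.unitaryGroup (Fin 2) ℂ)
    (hC₁ : C₁ ∈ Matrix.unitaryGroup (Fin 2) ℂ) (k : ℝ) :
    twoStep C₀ C₁ k ∈ Matrix.unitaryGroup (Fin 2) ℂ :=
  mul_mem (mul_mem (Rmat_mem_unitaryGroup k) hC₁) (mul_mem (Rmat_mem_unitaryGroup k) hC₀)

lemma continuous_twoStep (C₀ C₁ : Matrix (Fin 2) (Fin 2) ℂ) : Continuous (twoStep C₀ C₁) :=
  (continuous_Rmat.mul continuous_const).mul (continuous_Rmat.mul continuous_const)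

lemma det_Rmat (k : ℝ) : (Rmat k).det = 1 := by
  rw [Rmat, Matrix.det_fin_two_of, ← Complex.exp_add, add_neg_cancel, Complex.exp_zero, mul_zero,
    sub_zero]

lemma det_twoStep (C₀ C₁ : Matrix (Fin 2) (Fin 2) ℂ) (k : ℝ) :
    (twoStep C₀ C₁ k).det = C₁.det * C₀.det := by
  simp only [twoStep, Matrix.det_mul, det_Rmat, one_mul]

section HalfTime

open scoped Matrix.Norms.L2Operator

variable {U : ℕ → Matrix (Fin 2) (Fin 2) ℂ}

lemma norm_conjTranspose_propagator_succ_mul_sub_le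
    (hU : ∀ t, U t ∈ Matrix.unitaryGroup (Fin 2) ℂ) (t : ℕ) (k k' : ℝ) :
    ‖(propagator U (t + 1) k)ᴴ * propagator U (t + 1) k' -
      (propagator U t k)ᴴ * propagator U t k'‖ ≤ ‖(Rmat k)ᴴ * Rmat k' - 1‖ := by
  have hcoin : (U t)ᴴ * U t = 1 := Unitary.star_mul_self_of_mem (hU t)
  have hfactor : (propagator U (t + 1) k)ᴴ * propagator U (t + 1) k' -
      (propagator U t k)ᴴ * propagator U t k' =
      star (U t * propagator U t k) * (((Rmat k)ᴴ * Rmat k' - 1) * (U t * propagator U t k')) := by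
    rw [Matrix.star_eq_conjTranspose]
    simp only [propagator, Matrix.conjTranspose_mul, sub_mul, mul_sub, mul_assoc, one_mul]
    rw [← mul_assoc (U t)ᴴ (U t), hcoin, one_mul]
  have hunitary : ∀ k, U t * propagator U t k ∈ Matrix.unitaryGroup (Fin 2) ℂ := fun k =>
    mul_mem (hU t) (propagator_mem_unitaryGroup hU t k)
  rw [hfactor, CStarRing.norm_mem_unitary_mul _ (Unitary.star_mem (hunitary k)),
    CStarRing.norm_mul_mem_unitary _ (hunitary k')]

lemma tendsto_conjTranspose_propagator_mul_propagator
    (hU : ∀ t, U t ∈ Matrix.unitaryGroup (Fin 2) ℂ) {k : ℝ} {κ : ℕ → ℝ}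
    (hκ : Tendsto κ atTop (𝓝 k)) {L : Matrix (Fin 2) (Fin 2) ℂ}
    (heven : Tendsto (fun t => (propagator U (2 * (t / 2)) k)ᴴ * propagator U (2 * (t / 2)) (κ t))
      atTop (𝓝 L)) :
    Tendsto (fun t => (propagator U t k)ᴴ * propagator U t (κ t)) atTop (𝓝 L) := by
  have hR : Tendsto (fun t => ‖(Rmat k)ᴴ * Rmat (κ t) - 1‖) atTop (𝓝 0) := by
    have hunit : (Rmat k)ᴴ * Rmat k = 1 := Unitary.star_mul_self_of_mem (Rmat_mem_unitaryGroup k)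
    have hlim := ((continuous_Rmat.tendsto k).comp hκ).const_mul (Rmat k)ᴴ
    rw [hunit] at hlim
    simpa using (hlim.sub_const 1).norm
  refine tendsto_of_tendsto_of_dist heven (squeeze_zero (fun _ => dist_nonneg) (fun t => ?_) hR)
  rcases Nat.even_or_odd' t with ⟨s, rfl | rfl⟩
  · rw [Nat.mul_div_cancel_left s two_pos, dist_self]
    exact norm_nonneg _
  · rw [Nat.mul_add_div two_pos, Nat.div_eq_of_lt one_lt_two, add_zero, dist_comm, dist_eq_norm]
    exact norm_conjTranspose_propagator_succ_mul_sub_le hU (2 * s) k _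

end HalfTime

lemma tendsto_half_mul_div (ξ : ℝ) :
    Tendsto (fun t : ℕ => ((t / 2 : ℕ) : ℝ) * (ξ / t)) atTop (𝓝 (ξ / 2)) := by
  have hfloor : Tendsto (fun t : ℕ => ((t / 2 : ℕ) : ℝ) / t) atTop (𝓝 (2⁻¹ : ℝ)) := by
    refine ((tendsto_nat_floor_mul_div_atTop (R := ℝ) (a := 2⁻¹) (by positivity)).comp
      tendsto_natCast_atTop_atTop).congr fun t => ?_
    rw [Function.comp_apply, inv_mul_eq_div, Nat.floor_div_ofNat, Nat.floor_natCast]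
  rw [div_eq_mul_inv]
  exact (hfloor.const_mul ξ).congr fun t => by ring

end AlternatingCoin

section OrthogonalCoin

/-- The orthogonal matrix with first row `(a, b)` and determinant `Δ`, provided that
`a² + b² = Δ² = 1`. -/
def orthogonalCoin (Δ a b : ℝ) : Matrix (Fin 2) (Fin 2) ℂ :=
  !![(a : ℂ), (b : ℂ); ((-(Δ * b) : ℝ) : ℂ), ((Δ * a : ℝ) : ℂ)]

lemma orthogonalCoin_mem_unitaryGroup {Δ a b : ℝ} (hΔ : Δ ^ 2 = 1) (h : a ^ 2 + b ^ 2 = 1) :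
    orthogonalCoin Δ a b ∈ Matrix.unitaryGroup (Fin 2) ℂ := by
  have hΔ' : (Δ : ℂ) ^ 2 = 1 := by exact_mod_cast hΔ
  have h' : (a : ℂ) ^ 2 + (b : ℂ) ^ 2 = 1 := by exact_mod_cast h
  rw [Matrix.mem_unitaryGroup_iff, Matrix.star_eq_conjTranspose]
  ext i j
  fin_cases i <;> fin_cases j <;>
    simp only [orthogonalCoin, Fin.zero_eta, Fin.mk_one, Matrix.mul_apply,
      Matrix.conjTranspose_apply, Fin.sum_univ_two, Matrix.of_apply, Matrix.cons_val',
      Matrix.cons_val_fin_one, Matrix.cons_val_zero, Matrix.cons_val_one, RCLike.star_def,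
      map_neg, map_mul, conj_ofReal, ofReal_neg, ofReal_mul, Matrix.one_apply_eq, ne_eq,
      zero_ne_one, one_ne_zero, not_false_eq_true, Matrix.one_apply_ne]
  · linear_combination h'
  · ring
  · ring
  · linear_combination (a ^ 2 + b ^ 2 : ℂ) * hΔ' + h'

lemma det_orthogonalCoin {Δ a b : ℝ} (h : a ^ 2 + b ^ 2 = 1) :
    (orthogonalCoin Δ a b).det = Δ := by
  rw [orthogonalCoin, Matrix.det_fin_two_of]
  exact_mod_cast (by linear_combination Δ * h : a * (Δ * a) - b * -(Δ * b) = Δ)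

/-- The linear coefficient in the density of the limit law. -/
def drift (a b : ℝ) (α β : ℂ) : ℝ :=
  normSq α - normSq β + ((α * conj β + conj α * β) * (b : ℂ) / (a : ℂ)).re

lemma expectation_orthogonalCoin_neg_one {a : ℝ} (ha : a ≠ 0) (b : ℝ) (α β : ℂ) :
    expectation ![α, β] (orthogonalCoin (-1) a b) = a * drift a b α β := by
  have ha' : (a : ℂ) ≠ 0 := ofReal_ne_zero.2 ha
  have hreal : ((((α * conj β + conj α * β) * (b : ℂ) / (a : ℂ)).re : ℝ) : ℂ) =
      (α * conj β + conj α * β) * (b : ℂ) / (a : ℂ) := by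
    rw [← conj_eq_iff_re]
    simp only [map_div₀, map_mul, map_add, conj_conj, conj_ofReal]
    ring
  rw [drift, ofReal_add, hreal, ofReal_sub, normSq_eq_conj_mul_self, normSq_eq_conj_mul_self]
  simp only [expectation, orthogonalCoin, LinearMap.coe_mk, AddHom.coe_mk, dotProduct,
    Matrix.mulVec, Fin.sum_univ_two, Pi.star_apply, ← starRingEnd_apply, Matrix.of_apply,
    Matrix.cons_val', Matrix.cons_val_fin_one, Matrix.cons_val_zero, Matrix.cons_val_one,
    neg_mul, one_mul, neg_neg, ofReal_neg]
  field_simp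
  ring

variable {Δ a₀ b₀ a₁ b₁ : ℝ}

lemma twoStep_orthogonalCoin (hΔ : Δ ^ 2 = 1) (k : ℝ) :
    twoStep (orthogonalCoin Δ a₀ b₀) (orthogonalCoin Δ a₁ b₁) k =
      !![a₀ * a₁ * exp (2 * k * I) - Δ * b₀ * b₁, a₁ * b₀ * exp (2 * k * I) + Δ * a₀ * b₁;
        -(a₁ * b₀ * exp (-(2 * k * I)) + Δ * a₀ * b₁),
        a₀ * a₁ * exp (-(2 * k * I)) - Δ * b₀ * b₁] := by
  have hΔ' : (Δ : ℂ) ^ 2 = 1 := by exact_mod_cast hΔ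
  have hcancel : exp (I * k) * exp (-(I * k)) = 1 := by
    rw [← Complex.exp_add, add_neg_cancel, Complex.exp_zero]
  have hsq : exp (2 * k * I) = exp (I * k) * exp (I * k) := by
    rw [← Complex.exp_add]
    ring_nf
  have hsq' : exp (-(2 * k * I)) = exp (-(I * k)) * exp (-(I * k)) := by
    rw [← Complex.exp_add]
    ring_nf
  rw [hsq, hsq']
  ext i j
  fin_cases i <;> fin_cases j <;>
    simp only [twoStep, Rmat, orthogonalCoin, Fin.zero_eta, Fin.mk_one, Matrix.mul_apply,
      Fin.sum_univ_two, Matrix.of_apply, Matrix.cons_val', Matrix.cons_val_fin_one,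
      Matrix.cons_val_zero, Matrix.cons_val_one, ofReal_neg, ofReal_mul]
  · linear_combination (-(Δ * b₀ * b₁ : ℂ)) * hcancel
  · linear_combination (Δ * a₀ * b₁ : ℂ) * hcancel
  · linear_combination (-(Δ * a₀ * b₁ : ℂ)) * hcancel -
      a₁ * b₀ * exp (-(I * k)) * exp (-(I * k)) * hΔ'
  · linear_combination (-(Δ * b₀ * b₁ : ℂ)) * hcancel +
      a₀ * a₁ * exp (-(I * k)) * exp (-(I * k)) * hΔ'

lemma trace_twoStep_orthogonalCoin (hΔ : Δ ^ 2 = 1) (k : ℝ) :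
    (twoStep (orthogonalCoin Δ a₀ b₀) (orthogonalCoin Δ a₁ b₁) k).trace =
      2 * ((a₀ * a₁ * Real.cos (2 * k) + b₀ * -(Δ * b₁) : ℝ) : ℂ) := by
  rw [twoStep_orthogonalCoin hΔ, Matrix.trace_fin_two_of]
  push_cast
  rw [Complex.cos]
  ring_nf

lemma twoStep_orthogonalCoin_sub_neg (hΔ : Δ ^ 2 = 1) (k : ℝ) :
    twoStep (orthogonalCoin Δ a₀ b₀) (orthogonalCoin Δ a₁ b₁) k -
      twoStep (orthogonalCoin Δ a₀ b₀) (orthogonalCoin Δ a₁ b₁) (-k) =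
    (2 * I * (a₁ * Real.sin (2 * k) : ℝ)) • orthogonalCoin (-1) a₀ b₀ := by
  have hsin : 2 * I * Complex.sin (2 * k) = exp (2 * k * I) - exp (-(2 * k * I)) := by
    rw [Complex.sin, neg_mul]
    linear_combination (exp (-(2 * k * I)) - exp (2 * k * I)) * I_sq
  rw [twoStep_orthogonalCoin hΔ, twoStep_orthogonalCoin hΔ]
  ext i j
  fin_cases i <;> fin_cases j <;>
    simp only [orthogonalCoin, Fin.zero_eta, Fin.mk_one, Matrix.sub_apply, Matrix.smul_apply,
      Matrix.of_apply, Matrix.cons_val', Matrix.cons_val_fin_one, Matrix.cons_val_zero,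
      Matrix.cons_val_one, smul_eq_mul, ofReal_neg, ofReal_mul, ofReal_one, ofReal_sin,
      ofReal_ofNat, mul_neg, neg_mul, neg_neg]
  · linear_combination (-(a₀ * a₁ : ℂ)) * hsin
  · linear_combination (-(a₁ * b₀ : ℂ)) * hsin
  · linear_combination (-(a₁ * b₀ : ℂ)) * hsin
  · linear_combination (a₀ * a₁ : ℂ) * hsin

/-- The angle `θ` with `cos θ = p cos φ + q`. For the two-step evolution, `e^{±iθ}` are its
eigenvalues when `φ = 2k`. -/
def phase (p q φ : ℝ) : ℝ :=
  Real.arccos (p * Real.cos φ + q)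

lemma hasDerivAt_phase {p q φ : ℝ} (h : 0 < 1 - (p * Real.cos φ + q) ^ 2) :
    HasDerivAt (phase p q) (velocity p q φ) φ := by
  have hcos : HasDerivAt (fun φ => p * Real.cos φ + q) (p * -Real.sin φ) φ :=
    ((Real.hasDerivAt_cos φ).const_mul p).add_const q
  refine ((Real.hasDerivAt_arccos (fun h' => ?_) fun h' => ?_).comp φ hcos).congr_deriv ?_
  · simp [h'] at h
  · simp [h'] at h
  · rw [velocity]
    ring

lemma phase_neg (p q φ : ℝ) : phase p q (-φ) = phase p q φ := by
  rw [phase, phase, Real.cos_neg]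

lemma cos_phase (h₀ : a₀ ^ 2 + b₀ ^ 2 = 1) (h₁ : a₁ ^ 2 + b₁ ^ 2 = 1) (φ : ℝ) :
    Real.cos (phase (a₀ * a₁) (b₀ * b₁) φ) = a₀ * a₁ * Real.cos φ + b₀ * b₁ := by
  have hle : (a₀ * a₁ * Real.cos φ + b₀ * b₁) ^ 2 ≤ 1 := by
    rw [← sub_nonneg, one_sub_phase_sq h₀ h₁]
    positivity
  rw [sq_le_one_iff_abs_le_one, abs_le] at hle
  exact Real.cos_arccos hle.1 hle.2

lemma tendsto_overlap_orthogonalCoin (hΔ : Δ ^ 2 = 1) (h₀ : a₀ ^ 2 + b₀ ^ 2 = 1)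
    (h₁ : a₁ ^ 2 + b₁ ^ 2 = 1) (ha₁ : a₁ ≠ 0) {k : ℝ} (hk : Real.sin (2 * k) ≠ 0)
    (φ : Fin 2 → ℂ) (ξ : ℝ) :
    Tendsto (fun t : ℕ =>
      overlap (alternatingCoin (orthogonalCoin Δ a₀ b₀) (orthogonalCoin Δ a₁ b₁)) φ t k (k - ξ / t))
      atTop (𝓝 (expectation φ (planeRotation
        (rotationGenerator (twoStep (orthogonalCoin Δ a₀ b₀) (orthogonalCoin Δ a₁ b₁) k)
          (phase (a₀ * a₁) (b₀ * -(Δ * b₁)) (2 * k)))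
        (-(ξ * velocity (a₀ * a₁) (b₀ * -(Δ * b₁)) (2 * k)))))) := by
  have hC₀ := orthogonalCoin_mem_unitaryGroup hΔ h₀
  have hC₁ := orthogonalCoin_mem_unitaryGroup hΔ h₁
  have h₁' : a₁ ^ 2 + (-(Δ * b₁)) ^ 2 = 1 := by linear_combination h₁ + b₁ ^ 2 * hΔ
  have hpos := one_sub_phase_sq_pos_of_sin_ne_zero h₀ h₁' ha₁ hk
  have hsin : Real.sin (phase (a₀ * a₁) (b₀ * -(Δ * b₁)) (2 * k)) ≠ 0 := by
    rw [phase, Real.sin_arccos]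
    exact (Real.sqrt_pos.2 hpos).ne'
  have hθ : HasDerivAt (fun k => phase (a₀ * a₁) (b₀ * -(Δ * b₁)) (2 * k))
      (velocity (a₀ * a₁) (b₀ * -(Δ * b₁)) (2 * k) * 2) k := by
    have h := (hasDerivAt_phase hpos).comp k ((hasDerivAt_id k).const_mul 2)
    rwa [mul_one] at h
  have hκ : Tendsto (fun t : ℕ => k - ξ / t) atTop (𝓝 k) := by
    simpa using (tendsto_const_div_atTop_nhds_zero_nat ξ).const_sub k
  have hsκ : Tendsto (fun t : ℕ => ((t / 2 : ℕ) : ℝ) * (k - ξ / t - k)) atTop (𝓝 (-(ξ / 2))) := by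
    simpa using (tendsto_half_mul_div ξ).neg
  refine ((continuous_expectation φ).tendsto _).comp
    (tendsto_conjTranspose_propagator_mul_propagator
      (alternatingCoin_mem_unitaryGroup hC₀ hC₁) hκ ?_)
  simp only [propagator_alternatingCoin_two_mul]
  convert tendsto_conjTranspose_pow_mul_pow
    (θ := fun k => phase (a₀ * a₁) (b₀ * -(Δ * b₁)) (2 * k)) (twoStep_mem_unitaryGroup hC₀ hC₁)
    (fun k => ?_) (fun k => ?_) (continuous_twoStep _ _).continuousAt hsin hθ hκ hsκ using 3
  · ring
  · rw [det_twoStep, det_orthogonalCoin h₀, det_orthogonalCoin h₁, ← ofReal_mul, ← sq, hΔ,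
      ofReal_one]
  · rw [trace_twoStep_orthogonalCoin hΔ, cos_phase h₀ h₁']

lemma rotationGenerator_twoStep_sub_neg (hΔ : Δ ^ 2 = 1) (ha₀ : a₀ ≠ 0) (k : ℝ) :
    rotationGenerator (twoStep (orthogonalCoin Δ a₀ b₀) (orthogonalCoin Δ a₁ b₁) k)
        (phase (a₀ * a₁) (b₀ * -(Δ * b₁)) (2 * k)) -
      rotationGenerator (twoStep (orthogonalCoin Δ a₀ b₀) (orthogonalCoin Δ a₁ b₁) (-k))
        (phase (a₀ * a₁) (b₀ * -(Δ * b₁)) (2 * k)) =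
    (2 * I * (velocity (a₀ * a₁) (b₀ * -(Δ * b₁)) (2 * k) / a₀ : ℝ)) •
      orthogonalCoin (-1) a₀ b₀ := by
  rw [rotationGenerator, rotationGenerator, ← smul_sub, sub_sub_sub_cancel_right,
    twoStep_orthogonalCoin_sub_neg hΔ, ← Complex.coe_smul, smul_smul, phase, Real.sin_arccos,
    velocity, mul_left_comm, ← ofReal_mul]
  congr 3
  field_simp

/-- The integrand `(1 - C x) e^{iξx}` of the characteristic function of a law whose density is a
symmetric function times `1 - C x`. -/
def tiltedCharacter (C ξ x : ℝ) : ℂ := (1 - C * x) * exp (ξ * x * I)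

lemma continuous_tiltedCharacter (C ξ : ℝ) : Continuous (tiltedCharacter C ξ) := by
  unfold tiltedCharacter
  fun_prop

lemma tiltedCharacter_add_neg (C ξ x : ℝ) :
    tiltedCharacter C ξ x + tiltedCharacter C ξ (-x) =
      2 * Real.cos (ξ * x) - 2 * I * C * x * Real.sin (ξ * x) := by
  rw [tiltedCharacter, tiltedCharacter, ← ofReal_mul ξ, ← ofReal_mul ξ, mul_neg, exp_mul_I,
    exp_mul_I]
  push_cast
  rw [Complex.cos_neg, Complex.sin_neg]
  ring

lemma expectation_rotationGenerator_twoStep_sub_neg (hΔ : Δ ^ 2 = 1) (ha₀ : a₀ ≠ 0) (k : ℝ)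
    (α β : ℂ) :
    expectation ![α, β]
        (rotationGenerator (twoStep (orthogonalCoin Δ a₀ b₀) (orthogonalCoin Δ a₁ b₁) k)
          (phase (a₀ * a₁) (b₀ * -(Δ * b₁)) (2 * k))) -
      expectation ![α, β]
        (rotationGenerator (twoStep (orthogonalCoin Δ a₀ b₀) (orthogonalCoin Δ a₁ b₁) (-k))
          (phase (a₀ * a₁) (b₀ * -(Δ * b₁)) (2 * k))) =
    2 * I * velocity (a₀ * a₁) (b₀ * -(Δ * b₁)) (2 * k) * drift a₀ b₀ α β := by
  have ha₀' : (a₀ : ℂ) ≠ 0 := ofReal_ne_zero.2 ha₀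
  rw [← map_sub, rotationGenerator_twoStep_sub_neg hΔ ha₀, map_smul,
    expectation_orthogonalCoin_neg_one ha₀, smul_eq_mul, ofReal_div]
  field_simp

lemma tendsto_overlap_add_overlap_neg (hΔ : Δ ^ 2 = 1) (h₀ : a₀ ^ 2 + b₀ ^ 2 = 1)
    (h₁ : a₁ ^ 2 + b₁ ^ 2 = 1) (ha₀ : a₀ ≠ 0) (ha₁ : a₁ ≠ 0) {k : ℝ} (hk : Real.sin (2 * k) ≠ 0)
    {α β : ℂ} (hαβ : star ![α, β] ⬝ᵥ ![α, β] = 1) (ξ : ℝ) :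
    Tendsto (fun t : ℕ =>
        overlap (alternatingCoin (orthogonalCoin Δ a₀ b₀) (orthogonalCoin Δ a₁ b₁)) ![α, β] t
          k (k - ξ / t) +
        overlap (alternatingCoin (orthogonalCoin Δ a₀ b₀) (orthogonalCoin Δ a₁ b₁)) ![α, β] t
          (-k) (-k - ξ / t)) atTop
      (𝓝 (tiltedCharacter (drift a₀ b₀ α β) ξ (velocity (a₀ * a₁) (b₀ * -(Δ * b₁)) (2 * k)) +
        tiltedCharacter (drift a₀ b₀ α β) ξ
          (-velocity (a₀ * a₁) (b₀ * -(Δ * b₁)) (2 * k)))) := by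
  have hk' : Real.sin (2 * -k) ≠ 0 := by
    rwa [mul_neg, Real.sin_neg, neg_ne_zero]
  have hgen := expectation_rotationGenerator_twoStep_sub_neg (b₀ := b₀) (a₁ := a₁) (b₁ := b₁)
    hΔ ha₀ k α β
  convert (tendsto_overlap_orthogonalCoin hΔ h₀ h₁ ha₁ hk ![α, β] ξ).add
    (tendsto_overlap_orthogonalCoin hΔ h₀ h₁ ha₁ hk' ![α, β] ξ) using 2
  rw [tiltedCharacter_add_neg, mul_neg 2 k, phase_neg, velocity_neg, mul_neg ξ, neg_neg]
  simp only [planeRotation, map_add, ← Complex.coe_smul, map_smul, expectation_one, hαβ,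
    smul_eq_mul, mul_one, Real.cos_neg, Real.sin_neg, ofReal_neg]
  linear_combination (Real.sin (ξ * velocity (a₀ * a₁) (b₀ * -(Δ * b₁)) (2 * k)) : ℂ) * hgen

lemma abs_drift_mul_abs_le_one {a b : ℝ} (ha : a ≠ 0) (h : a ^ 2 + b ^ 2 = 1) {α β : ℂ}
    (hαβ : star ![α, β] ⬝ᵥ ![α, β] = 1) : |drift a b α β| * |a| ≤ 1 := by
  open scoped Matrix.Norms.L2Operator in
  calc |drift a b α β| * |a| = ‖expectation ![α, β] (orthogonalCoin (-1) a b)‖ := by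
        rw [expectation_orthogonalCoin_neg_one ha, ← ofReal_mul, norm_real, Real.norm_eq_abs,
          abs_mul, mul_comm]
    _ ≤ ‖orthogonalCoin (-1) a b‖ := norm_expectation_le hαβ _
    _ = 1 := CStarRing.norm_of_mem_unitary (orthogonalCoin_mem_unitaryGroup (by norm_num) h)

end OrthogonalCoin

section WeakLimit

/- That `f` has integral `1` is the convergence of the characteristic functions at `0`. -/
lemma tendsto_integral_of_tendsto_charFun {μ : ℕ → Measure ℝ}
    (hμ : ∀ t, IsProbabilityMeasure (μ t)) {f : ℝ → ℝ} (hf : Integrable f) (hf0 : ∀ x, 0 ≤ f x)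
    (hconv : ∀ ξ, Tendsto (fun t => charFun (μ t) ξ) atTop (𝓝 (∫ x, f x • exp (ξ * x * I))))
    (g : ℝ →ᵇ ℝ) : Tendsto (fun t => ∫ x, g x ∂μ t) atTop (𝓝 (∫ x, g x * f x)) := by
  let ν : Measure ℝ := volume.withDensity fun x => ENNReal.ofReal (f x)
  have hint {E : Type} [NormedAddCommGroup E] [NormedSpace ℝ E] (h : ℝ → E) :
      ∫ x, h x ∂ν = ∫ x, f x • h x := by
    rw [integral_withDensity_eq_integral_toReal_smul₀ hf.aemeasurable.ennreal_ofReal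
      (Eventually.of_forall fun _ => ENNReal.ofReal_lt_top)]
    simp only [ENNReal.toReal_ofReal (hf0 _)]
  have hchar (ξ : ℝ) : Tendsto (fun t => charFun (μ t) ξ) atTop (𝓝 (charFun ν ξ)) := by
    rw [charFun_apply_real, hint]
    exact hconv ξ
  have hν : IsProbabilityMeasure ν := by
    have : IsFiniteMeasure ν := isFiniteMeasure_withDensity_ofReal hf.2
    have hmass : charFun ν 0 = 1 := tendsto_nhds_unique (hchar 0) (by simp [charFun_zero])
    rw [charFun_zero, ofReal_eq_one] at hmass
    exact ⟨(ENNReal.toReal_eq_one_iff _).1 hmass⟩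
  have hweak : Tendsto (β := ProbabilityMeasure ℝ) (fun t => ⟨μ t, hμ t⟩) atTop (𝓝 ⟨ν, hν⟩) :=
    ProbabilityMeasure.tendsto_of_tendsto_charFun hchar
  have h := ProbabilityMeasure.tendsto_iff_forall_integral_tendsto.1 hweak g
  simpa only [ProbabilityMeasure.coe_mk, hint, smul_eq_mul, mul_comm (g _)] using h

variable {Δ a₀ b₀ a₁ b₁ : ℝ} {α β : ℂ} {ψ : ℕ → ℤ → Fin 2 → ℂ}

lemma QWEvolves.charFun_qwMeasure_eq_integral_add_neg {U : ℕ → Matrix (Fin 2) (Fin 2) ℂ}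
    (hevol : QWEvolves U ψ) (hinit : QWInit α β ψ) (t : ℕ) (ξ : ℝ) :
    charFun (qwMeasure ψ t) ξ = (2 * π : ℂ)⁻¹ * ∫ k in (0 : ℝ)..π,
      (overlap U ![α, β] t k (k - ξ / t) + overlap U ![α, β] t (-k) (-k - ξ / t)) := by
  rw [hevol.charFun_qwMeasure hinit, integral_neg_self_eq_integral_zero_add_comp_neg
    ((continuous_overlap_sub U ![α, β] t (ξ / t)).intervalIntegrable _ _)]

lemma tendsto_integral_overlap_add_overlap_neg (hΔ : Δ ^ 2 = 1) (h₀ : a₀ ^ 2 + b₀ ^ 2 = 1)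
    (h₁ : a₁ ^ 2 + b₁ ^ 2 = 1) (ha₀ : a₀ ≠ 0) (ha₁ : a₁ ≠ 0)
    (hαβ : star ![α, β] ⬝ᵥ ![α, β] = 1) (ξ : ℝ) :
    Tendsto (fun t : ℕ => ∫ k in (0 : ℝ)..π,
        (overlap (alternatingCoin (orthogonalCoin Δ a₀ b₀) (orthogonalCoin Δ a₁ b₁)) ![α, β] t
          k (k - ξ / t) +
        overlap (alternatingCoin (orthogonalCoin Δ a₀ b₀) (orthogonalCoin Δ a₁ b₁)) ![α, β] t
          (-k) (-k - ξ / t))) atTop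
      (𝓝 (∫ k in (0 : ℝ)..π,
        (tiltedCharacter (drift a₀ b₀ α β) ξ (velocity (a₀ * a₁) (b₀ * -(Δ * b₁)) (2 * k)) +
        tiltedCharacter (drift a₀ b₀ α β) ξ
          (-velocity (a₀ * a₁) (b₀ * -(Δ * b₁)) (2 * k))))) := by
  have hU := alternatingCoin_mem_unitaryGroup (orthogonalCoin_mem_unitaryGroup hΔ h₀)
    (orthogonalCoin_mem_unitaryGroup hΔ h₁)
  refine intervalIntegral.tendsto_integral_filter_of_dominated_convergence (fun _ => 1 + 1)
    (Eventually.of_forall fun t => ?_)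
    (Eventually.of_forall fun t => Eventually.of_forall fun k _ => norm_add_le_of_le
      (norm_overlap_le_one hU hαβ t _ _) (norm_overlap_le_one hU hαβ t _ _))
    intervalIntegrable_const ?_
  · have hcont := continuous_overlap_sub
      (alternatingCoin (orthogonalCoin Δ a₀ b₀) (orthogonalCoin Δ a₁ b₁)) ![α, β] t (ξ / t)
    exact (hcont.add (hcont.comp continuous_neg)).aestronglyMeasurable
  · filter_upwards [ae_sin_two_mul_ne_zero] with k hk _
    exact tendsto_overlap_add_overlap_neg hΔ h₀ h₁ ha₀ ha₁ hk hαβ ξ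

lemma tendsto_charFun_qwMeasure (hΔ : Δ ^ 2 = 1) (h₀ : a₀ ^ 2 + b₀ ^ 2 = 1)
    (h₁ : a₁ ^ 2 + b₁ ^ 2 = 1) (ha₀ : a₀ ≠ 0) (ha₁ : a₁ ≠ 0) (hmin : min |a₀| |a₁| < 1)
    (hαβ : star ![α, β] ⬝ᵥ ![α, β] = 1)
    (hevol : QWEvolves (alternatingCoin (orthogonalCoin Δ a₀ b₀) (orthogonalCoin Δ a₁ b₁)) ψ)
    (hinit : QWInit α β ψ) (ξ : ℝ) :
    Tendsto (fun t => charFun (qwMeasure ψ t) ξ) atTop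
      (𝓝 (∫ x, konnoDensity (min |a₀| |a₁|) x • tiltedCharacter (drift a₀ b₀ α β) ξ x)) := by
  have h₁' : a₁ ^ 2 + (-(Δ * b₁)) ^ 2 = 1 := by linear_combination h₁ + b₁ ^ 2 * hΔ
  have hlim := (tendsto_integral_overlap_add_overlap_neg hΔ h₀ h₁ ha₀ ha₁ hαβ ξ).const_mul
    (2 * π : ℂ)⁻¹
  have hpi : (2 * π : ℂ) ≠ 0 := by exact_mod_cast Real.two_pi_pos.ne'
  rw [integral_add_neg_comp_velocity h₀ h₁' ha₀ ha₁ hmin (continuous_tiltedCharacter _ ξ),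
    real_smul, ofReal_mul, ofReal_ofNat, inv_mul_cancel_left₀ hpi] at hlim
  exact hlim.congr fun t => (hevol.charFun_qwMeasure_eq_integral_add_neg hinit t ξ).symm

lemma qwWeakLimit_alternatingCoin (hΔ : Δ ^ 2 = 1) (h₀ : a₀ ^ 2 + b₀ ^ 2 = 1)
    (h₁ : a₁ ^ 2 + b₁ ^ 2 = 1) (ha₀ : a₀ ≠ 0) (ha₁ : a₁ ≠ 0) (hmin : min |a₀| |a₁| < 1)
    (hαβ : normSq α + normSq β = 1)
    (hevol : QWEvolves (alternatingCoin (orthogonalCoin Δ a₀ b₀) (orthogonalCoin Δ a₁ b₁)) ψ)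
    (hinit : QWInit α β ψ) :
    qwWeakLimit ψ fun x => konnoDensity (min |a₀| |a₁|) x * (1 - drift a₀ b₀ α β * x) := by
  have hφ : star ![α, β] ⬝ᵥ ![α, β] = 1 := by
    rw [← ofReal_one, ← hαβ, ofReal_add, normSq_eq_conj_mul_self, normSq_eq_conj_mul_self]
    simp [dotProduct, Fin.sum_univ_two]
  have hU := alternatingCoin_mem_unitaryGroup (orthogonalCoin_mem_unitaryGroup hΔ h₀)
    (orthogonalCoin_mem_unitaryGroup hΔ h₁)
  have hpos : 0 < min |a₀| |a₁| := lt_min (abs_pos.2 ha₀) (abs_pos.2 ha₁)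
  have hsq : min |a₀| |a₁| ^ 2 < 1 := pow_lt_one₀ hpos.le hmin two_ne_zero
  have hdrift : |drift a₀ b₀ α β| * |(min |a₀| |a₁|)| ≤ 1 := by
    rw [abs_of_pos hpos]
    exact (mul_le_mul_of_nonneg_left (min_le_left _ _) (abs_nonneg _)).trans
      (abs_drift_mul_abs_le_one ha₀ h₀ hφ)
  refine tendsto_integral_of_tendsto_charFun
    (fun t => hevol.isProbabilityMeasure_qwMeasure hinit hU hφ t)
    (integrable_konnoDensity_smul hpos hsq (by fun_prop))
    (konnoDensity_mul_one_sub_mul_nonneg hsq hdrift) fun ξ => ?_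
  convert tendsto_charFun_qwMeasure hΔ h₀ h₁ ha₀ ha₁ hmin hφ hevol hinit ξ using 4 with x
  rw [mul_smul, tiltedCharacter]
  simp

end WeakLimit

lemma entries_of_transpose_mul_self_eq_one {a b c d : ℝ}
    (h : Matrix.transpose (!![a, b; c, d] : Matrix (Fin 2) (Fin 2) ℝ) * !![a, b; c, d] = 1) :
    a ^ 2 + b ^ 2 = 1 ∧ (a * d - b * c) ^ 2 = 1 ∧
      c = -((a * d - b * c) * b) ∧ d = (a * d - b * c) * a := by
  have h' := mul_eq_one_comm.1 h
  have e00 := congrFun (congrFun h 0) 0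
  have e01 := congrFun (congrFun h 0) 1
  have e11 := congrFun (congrFun h 1) 1
  have f00 := congrFun (congrFun h' 0) 0
  simp only [Matrix.mul_apply, Matrix.transpose_apply, Fin.sum_univ_two, Matrix.of_apply,
    Matrix.cons_val', Matrix.cons_val_fin_one, Matrix.cons_val_zero, Matrix.cons_val_one,
    Matrix.one_apply_eq, ne_eq, zero_ne_one, not_false_eq_true, Matrix.one_apply_ne]
    at e00 e01 e11 f00
  refine ⟨by linarith, ?_, ?_, ?_⟩
  · linear_combination e11 + (b ^ 2 + d ^ 2) * e00 - (a * b + c * d) * e01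
  · linear_combination -c * e11 + d * e01
  · linear_combination -d * e00 + c * e01

/-- Two-period QW with orthogonal coins, case `det(H₁H₀) > 0`:
`X_t/t ⇒ Z` with density `f_K(x; a_ξ)·[1 − (|α|²−|β|² + (αβ̄+ᾱβ)b₀/a₀)x]`,
where `|a_ξ| = min{|a₀|, |a₁|}`. -/
theorem two_period_QW_weak_limit_det_pos
    (a₀ b₀ c₀ d₀ a₁ b₁ c₁ d₁ : ℝ)
    (hne : a₀ ≠ 0 ∧ b₀ ≠ 0 ∧ c₀ ≠ 0 ∧ d₀ ≠ 0 ∧ a₁ ≠ 0 ∧ b₁ ≠ 0 ∧ c₁ ≠ 0 ∧ d₁ ≠ 0)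
    (horth₀ : Matrix.transpose (!![a₀, b₀; c₀, d₀] : Matrix (Fin 2) (Fin 2) ℝ) * !![a₀, b₀; c₀, d₀] = 1)
    (horth₁ : Matrix.transpose (!![a₁, b₁; c₁, d₁] : Matrix (Fin 2) (Fin 2) ℝ) * !![a₁, b₁; c₁, d₁] = 1)
    (hdet : 0 < ((!![a₁, b₁; c₁, d₁] : Matrix (Fin 2) (Fin 2) ℝ) * !![a₀, b₀; c₀, d₀]).det)
    (α β : ℂ) (hαβ : Complex.normSq α + Complex.normSq β = 1)
    (ψ : ℕ → ℤ → Fin 2 → ℂ)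
    (hinit : QWInit α β ψ)
    (hevol : QWEvolves
      (fun t => if Even t then !![(a₀ : ℂ), (b₀ : ℂ); (c₀ : ℂ), (d₀ : ℂ)]
                else !![(a₁ : ℂ), (b₁ : ℂ); (c₁ : ℂ), (d₁ : ℂ)]) ψ) :
    qwWeakLimit ψ (fun x =>
      konnoDensity (min |a₀| |a₁|) x *
        (1 - (Complex.normSq α - Complex.normSq β +
          ((α * (starRingEnd ℂ) β + (starRingEnd ℂ) α * β) * (b₀ : ℂ) / (a₀ : ℂ)).re) * x)) := by
  obtain ⟨ha₀, hb₀, -, -, ha₁, -, -, -⟩ := hne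
  obtain ⟨h₀, hΔ₀, hc₀, hd₀⟩ := entries_of_transpose_mul_self_eq_one horth₀
  obtain ⟨h₁, hΔ₁, hc₁, hd₁⟩ := entries_of_transpose_mul_self_eq_one horth₁
  rw [Matrix.det_mul, Matrix.det_fin_two_of, Matrix.det_fin_two_of] at hdet
  have hΔ : a₁ * d₁ - b₁ * c₁ = a₀ * d₀ - b₀ * c₀ := by
    rcases sq_eq_sq_iff_eq_or_eq_neg.1 (hΔ₁.trans hΔ₀.symm) with h | h
    · exact h
    · rw [h] at hdet
      nlinarith
  rw [hΔ] at hc₁ hd₁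
  generalize a₀ * d₀ - b₀ * c₀ = Δ at *
  subst hc₀ hd₀ hc₁ hd₁
  have hmin : min |a₀| |a₁| < 1 := min_lt_of_left_lt <| by
    rw [← sq_lt_one_iff_abs_lt_one, ← h₀]
    exact lt_add_of_pos_right _ (sq_pos_of_ne_zero hb₀)
  exact qwWeakLimit_alternatingCoin hΔ₀ h₀ h₁ ha₀ ha₁ hmin hαβ hevol hinit
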